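/- arXiv:1110.3490 — 2 statements merged into one kernel-verified Lean document; each statement's English description precedes it below -/
import Mathlib

section
/- Let n, r ∈ ℕ such that r divides n. Suppose G is a graph on n vertices such that for all non-adjacent distinct vertices x, y of G, d(x) + d(y) ≥ 2(1 − 1/r)n − 1. Then G contains a perfect K_r-packing. -/
/-- The degree of a vertex. -/
noncomputable def deg {V : Type*} (G : SimpleGraph V) (v : V) : ℕ := Nat.card (G.neighborSet v)

/-- A perfect `K_r`-packing: a collection of vertex-disjoint `r`-cliques covering all vertices. -/
def HasPerfectKrPacking {n : ℕ} (G : SimpleGraph (Fin n)) (r : ℕ) : Prop :=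
  ∃ P : Finset (Finset (Fin n)),
    (∀ p ∈ P, p.card = r ∧ G.IsClique (p : Set (Fin n))) ∧
    (P : Set (Finset (Fin n))).PairwiseDisjoint id ∧
    P.biUnion id = Finset.univ

section Packing
open Finset Relation
set_option linter.unusedSectionVars false

section Rel
variable {ι : Type*}

/-- Restricting a relation to avoid `U`. -/
def avd (r : ι → ι → Prop) (U : ι) : ι → ι → Prop := fun x y => r x y ∧ x ≠ U ∧ y ≠ U

lemma exit_step (r : ι → ι → Prop) (a c : ι) (h : ReflTransGen r c a) (hca : c ≠ a) :
    ∃ d, r c d ∧ d ≠ c ∧ ReflTransGen (avd r c) d a := by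
  have key : ∀ x, ReflTransGen r x a → (x ≠ c ∧ ReflTransGen (avd r c) x a) ∨
      ∃ d, r c d ∧ d ≠ c ∧ ReflTransGen (avd r c) d a := by
    intro x hx
    induction hx using ReflTransGen.head_induction_on with
    | refl => exact Or.inl ⟨hca.symm, ReflTransGen.refl⟩
    | @head x y hxy _ ih =>
      rcases ih with ⟨h1, h2⟩ | h
      · by_cases hxc : x = c
        · subst hxc
          exact Or.inr ⟨y, hxy, h1, h2⟩
        · exact Or.inl ⟨hxc, ReflTransGen.head ⟨hxy, hxc, h1⟩ h2⟩
      · exact Or.inr h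
  rcases key c h with h | h
  · exact absurd rfl h.1
  · exact h

lemma avd_transfer (r : ι → ι → Prop) (a u w d : ι) (hd : ReflTransGen (avd r u) d a)
    (hw : ¬ ReflTransGen (avd r u) w a) : ReflTransGen (avd r w) d a ∧ d ≠ w := by
  induction hd using ReflTransGen.head_induction_on with
  | refl => exact ⟨ReflTransGen.refl, by rintro rfl; exact hw ReflTransGen.refl⟩
  | @head x y hxy hy ih =>
    have hxw : x ≠ w := by rintro rfl; exact hw (ReflTransGen.head hxy hy)
    exact ⟨ReflTransGen.head ⟨hxy.1, hxw, ih.2⟩ ih.1, hxw⟩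

lemma avd_or (r : ι → ι → Prop) (a u w : ι) (hu : ReflTransGen r u a) (huw : u ≠ w) :
    ReflTransGen (avd r u) w a ∨ ReflTransGen (avd r w) u a := by
  by_cases hua : u = a
  · subst hua; exact Or.inr ReflTransGen.refl
  · obtain ⟨d, h1, h2, h3⟩ := exit_step r a u hu hua
    by_contra! hcon
    obtain ⟨h4, h5⟩ := avd_transfer r a u w d h3 hcon.1
    exact hcon.2 (ReflTransGen.head ⟨h1, huw, h5⟩ h4)

lemma not_avd_root (r : ι → ι → Prop) (a c : ι) (hc : c ≠ a) : ¬ ReflTransGen (avd r a) c a := by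
  intro h
  rcases ReflTransGen.cases_tail h with h | ⟨d, _, h⟩
  · exact hc h.symm
  · exact h.2.2 rfl

open Classical in
lemma exists_terminal [Fintype ι] (r : ι → ι → Prop) (a : ι) :
    ∃ T : Finset ι, ∃ U : ι, T.Nonempty ∧ (∀ W ∈ T, ReflTransGen r W a) ∧
      (∀ W ∈ T, ∀ c, ReflTransGen r c a → c ≠ W → ReflTransGen (avd r W) c a) ∧
      ∀ W ∈ T, ∀ X, ReflTransGen r X a → r W X → X ∈ T ∨ X = U := by
  set Dom : ι → Finset ι := fun U => univ.filter
    (fun c => ReflTransGen r c a ∧ c ≠ U ∧ ¬ ReflTransGen (avd r U) c a) with hDom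
  have mDom : ∀ U c, c ∈ Dom U ↔ ReflTransGen r c a ∧ c ≠ U ∧ ¬ ReflTransGen (avd r U) c a := by
    intro U c; simp [hDom]
  by_cases hex : ∃ U, ReflTransGen r U a ∧ (Dom U).Nonempty
  · obtain ⟨U, hU, hmin⟩ := Finset.exists_min_image
      (univ.filter (fun U => ReflTransGen r U a ∧ (Dom U).Nonempty)) (fun U => (Dom U).card)
      (by obtain ⟨U, hU⟩ := hex; exact ⟨U, by simpa using hU⟩)
    simp only [mem_filter, mem_univ, true_and] at hU hmin
    refine ⟨Dom U, U, hU.2, fun W hW => ((mDom _ _).1 hW).1, ?_, ?_⟩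
    · intro W hW c hc hcW
      by_contra hcon
      obtain ⟨hW1, hW2, hW3⟩ := (mDom _ _).1 hW
      have hne : (Dom W).Nonempty := ⟨c, (mDom _ _).2 ⟨hc, hcW, hcon⟩⟩
      have hle := hmin W ⟨hW1, hne⟩
      have hss : Dom W ⊂ Dom U := by
        refine (Finset.ssubset_iff_of_subset ?_).2 ⟨W, hW, by simp [mDom]⟩
        intro X hX
        obtain ⟨hX1, hX2, hX3⟩ := (mDom _ _).1 hX
        refine (mDom _ _).2 ⟨hX1, ?_, ?_⟩
        · rintro rfl
          rcases avd_or r a X W hX1 hX2 with h | h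
          · exact hW3 h
          · exact hX3 h
        · intro h
          exact hX3 (avd_transfer r a U W X h hW3).1
      exact absurd (Finset.card_lt_card hss) (by omega)
    · intro W hW X hX hWX
      obtain ⟨hW1, hW2, hW3⟩ := (mDom _ _).1 hW
      by_contra! hcon
      have : ReflTransGen (avd r U) X a := by
        by_contra h
        exact hcon.1 ((mDom _ _).2 ⟨hX, hcon.2, h⟩)
      exact hW3 (ReflTransGen.head ⟨hWX, hW2, hcon.2⟩ this)
  · push Not at hex
    have hall : ∀ c, ReflTransGen r c a → c = a := by
      intro c hc
      by_contra hca
      have := hex a ReflTransGen.refl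
      have h2 : c ∈ Dom a := (mDom _ _).2 ⟨hc, hca, not_avd_root r a c hca⟩
      rw [this] at h2
      simp at h2
    refine ⟨{a}, a, by simp, ?_, ?_, ?_⟩
    · simp only [mem_singleton, forall_eq]; exact ReflTransGen.refl
    · simp only [mem_singleton, forall_eq]
      intro c hc hca; exact absurd (hall c hc) hca
    · intro W _ X hX _; right; exact hall X hX
end Rel

section Col
variable {V : Type*} {ι : Type*} [DecidableEq V] [DecidableEq ι]

/-- Proper colouring on a set. -/
def PropOn (G : SimpleGraph V) (S : Finset V) (f : V → ι) : Prop :=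
  ∀ x ∈ S, ∀ y ∈ S, G.Adj x y → f x ≠ f y

/-- size of a colour class inside `S`. -/
def sz (S : Finset V) (f : V → ι) (e : ι) : ℕ := (S.filter (fun v => f v = e)).card

lemma PropOn.mono {G : SimpleGraph V} {S T : Finset V} {f : V → ι} (h : PropOn G S f)
    (hT : T ⊆ S) : PropOn G T f := fun x hx y hy => h x (hT hx) y (hT hy)

lemma PropOn.ins {G : SimpleGraph V} {S : Finset V} {f : V → ι} (h : PropOn G S f) {v : V}
    {c : ι} (hv : v ∉ S) (hc : ∀ u ∈ S, f u = c → ¬ G.Adj v u) :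
    PropOn G (insert v S) (Function.update f v c) := by
  intro x hx y hy hxy
  rw [mem_insert] at hx hy
  by_cases hxv : x = v
  · subst hxv
    have hyx : y ≠ x := hxy.ne'
    have hyS : y ∈ S := by tauto
    simp only [Function.update_self, Function.update_of_ne hyx]
    intro h
    exact hc y hyS h.symm hxy
  · have hxS : x ∈ S := by tauto
    by_cases hyv : y = v
    · subst hyv
      simp only [Function.update_self, Function.update_of_ne hxv]
      intro h
      exact hc x hxS h hxy.symm
    · have hyS : y ∈ S := by tauto
      simp only [Function.update_of_ne hxv, Function.update_of_ne hyv]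
      exact h x hxS y hyS hxy

lemma sz_congr {S : Finset V} {f g : V → ι} (h : ∀ v ∈ S, f v = g v) (e : ι) :
    sz S f e = sz S g e := by
  unfold sz
  congr 1
  apply Finset.filter_congr
  intro v hv; rw [h v hv]

lemma sz_ins {S : Finset V} {f : V → ι} {v : V} {c : ι} (hv : v ∉ S) (e : ι) :
    sz (insert v S) (Function.update f v c) e = sz S f e + if e = c then 1 else 0 := by
  have h1 : sz S (Function.update f v c) e = sz S f e := by
    apply sz_congr
    intro u hu
    rw [Function.update_of_ne]
    rintro rfl; exact hv hu
  rw [← h1]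
  unfold sz
  rw [Finset.filter_insert]
  simp only [Function.update_self]
  by_cases h : c = e
  · subst h
    simp [hv]
  · simp [h, Ne.symm h]

lemma sz_erase {S : Finset V} {f : V → ι} {v : V} (hv : v ∈ S) (e : ι) :
    sz (S.erase v) f e + (if e = f v then 1 else 0) = sz S f e := by
  have := sz_ins (S := S.erase v) (f := f) (v := v) (c := f v) (by simp) e
  rw [Finset.insert_erase hv, Function.update_eq_self] at this
  exact this.symm

/-- gluing two colourings -/
def glue (S : Finset V) (f g : V → ι) : V → ι := fun v => if v ∈ S then f v else g v

lemma PropOn.glue {G : SimpleGraph V} {S T : Finset V} {f g : V → ι} (hf : PropOn G S f)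
    (hg : PropOn G T g) (C : Finset ι) (hfC : ∀ v ∈ S, f v ∈ C) (hgC : ∀ v ∈ T, g v ∉ C) :
    PropOn G (S ∪ T) (glue S f g) := by
  intro x hx y hy hxy
  rw [mem_union] at hx hy
  unfold _root_.glue
  split_ifs with h1 h2 h2
  · exact hf x h1 y h2 hxy
  · intro h
    have hyT : y ∈ T := by tauto
    exact hgC y hyT (h ▸ hfC x h1)
  · intro h
    have hxT : x ∈ T := by tauto
    exact hgC x hxT (h ▸ hfC y h2)
  · exact hg x (by tauto) y (by tauto) hxy

lemma sz_glue {S T : Finset V} {f g : V → ι} (hd : Disjoint S T) (e : ι) :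
    sz (S ∪ T) (glue S f g) e = sz S f e + sz T g e := by
  have h1 : sz S (glue S f g) e = sz S f e := sz_congr (fun v hv => by simp [glue, hv]) e
  have h2 : sz T (glue S f g) e = sz T g e :=
    sz_congr (fun v hv => by simp [glue, Finset.disjoint_right.1 hd hv]) e
  rw [← h1, ← h2]
  unfold sz
  rw [Finset.filter_union, Finset.card_union_of_disjoint]
  exact Finset.disjoint_filter_filter hd

lemma sz_eq_zero {S : Finset V} {f : V → ι} {e : ι} (h : ∀ v ∈ S, f v ≠ e) : sz S f e = 0 := by
  unfold sz
  rw [Finset.card_eq_zero, Finset.filter_eq_empty_iff]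
  exact fun v hv => h v hv

variable [Fintype V]

/-- some vertex of class `c` can be moved to class `d`. -/
def mov (G : SimpleGraph V) (f : V → ι) (c d : ι) : Prop :=
  c ≠ d ∧ ∃ v, f v = c ∧ ∀ u, f u = d → ¬ G.Adj v u

lemma shift (G : SimpleGraph V) (f : V → ι) (hf : PropOn G univ f) (a : ι) :
    ∀ n : ℕ, ∀ P : Finset ι, P.card = n → ∀ c ∈ P,
      ReflTransGen (fun x y => mov G f x y ∧ x ∈ P ∧ y ∈ P) c a →
      ∃ f' : V → ι, PropOn G univ f' ∧ (∀ v, f v ∉ P → f' v = f v) ∧ (∀ v, f v ∈ P → f' v ∈ P) ∧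
        (∀ v, f' v = c → f v = c) ∧
        ∀ e, sz univ f' e + (if e = c then 1 else 0) = sz univ f e + if e = a then 1 else 0 := by
  intro n
  induction n with
  | zero =>
    intro P hP c hc
    rw [Finset.card_eq_zero] at hP
    subst hP; simp at hc
  | succ n ih =>
    intro P hP c hc hpath
    by_cases hca : c = a
    · subst hca
      exact ⟨f, hf, fun _ _ => rfl, fun _ h => h, fun _ h => h, fun _ => rfl⟩
    obtain ⟨d, ⟨⟨hcd, y, hy, hyd⟩, _, hdP⟩, hdc, hpath'⟩ := exit_step _ a c hpath hca
    obtain ⟨f', h1, h2, h3, h4, h5⟩ := ih (P.erase c) (by rw [Finset.card_erase_of_mem hc]; omega)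
      d (by simp [hdc, hdP]) (by
        refine ReflTransGen.mono ?_ _ _ hpath'
        rintro x y ⟨⟨hm, hx, hy⟩, hxc, hyc⟩
        exact ⟨hm, by simp [hx, hxc], by simp [hy, hyc]⟩)
    have hyc : f' y = c := by rw [h2 y (by simp [hy]), hy]
    have hback : ∀ v, f' v = c → f v = c := by
      intro v hv
      by_contra hvc
      by_cases hvP : f v ∈ P
      · have := h3 v (by simp [hvc, hvP])
        simp [hv] at this
      · rw [h2 v (by simp [hvP])] at hv
        exact hvc hv
    have hiu : insert y (univ.erase y) = (univ : Finset V) := Finset.insert_erase (mem_univ y)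
    refine ⟨Function.update f' y d, ?_, ?_, ?_, ?_, ?_⟩
    · have := (h1.mono (Finset.erase_subset y univ)).ins (v := y) (c := d) (by simp)
        (fun u _ hu => hyd u (h4 u hu))
      rwa [hiu] at this
    · intro v hv
      have : v ≠ y := by rintro rfl; rw [hy] at hv; exact hv hc
      rw [Function.update_of_ne this]
      exact h2 v (fun h => hv (Finset.mem_of_mem_erase h))
    · intro v hv
      by_cases hvy : v = y
      · subst hvy; simpa using hdP
      · rw [Function.update_of_ne hvy]
        by_cases hvc : f v = c
        · rw [h2 v (by simp [hvc])]; exact hv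
        · exact Finset.mem_of_mem_erase (h3 v (by simp [hvc, hv]))
    · intro v hv
      by_cases hvy : v = y
      · subst hvy; exact hy
      · rw [Function.update_of_ne hvy] at hv
        exact hback v hv
    · intro e
      have e1 := sz_ins (S := univ.erase y) (f := f') (v := y) (c := d) (by simp) e
      have e2 := sz_erase (S := univ) (f := f') (v := y) (by simp) e
      rw [hiu] at e1
      rw [hyc] at e2
      have e3 := h5 e
      omega
end Col
section Near
open Classical

variable {V : Type*} {ι : Type*} [Fintype V] [Fintype ι]

/-- degree into a set -/
noncomputable def dg (G : SimpleGraph V) (S : Finset V) (x : V) : ℕ := (S.filter (G.Adj x)).card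

/-- number of neighbours of `x` in `S` with colour `c` -/
noncomputable def nb (G : SimpleGraph V) (S : Finset V) (f : V → ι) (x : V) (c : ι) : ℕ :=
  (S.filter (fun v => f v = c ∧ G.Adj x v)).card

/-- accessible colours -/
noncomputable def accS (G : SimpleGraph V) (f : V → ι) (a : ι) : Finset ι :=
  univ.filter (fun c => ReflTransGen (mov G f) c a)

/-- vertices in accessible classes -/
noncomputable def AV (G : SimpleGraph V) (f : V → ι) (a : ι) : Finset V :=
  univ.filter (fun v => f v ∈ accS G f a)

/-- nearly equitable colouring with small class `a` and large class `b` (equitable if `a = b`) -/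
def NE (G : SimpleGraph V) (s : ℕ) (f : V → ι) (a b : ι) : Prop :=
  PropOn G univ f ∧ ∀ e, sz univ f e + (if e = a then 1 else 0) = s + if e = b then 1 else 0

/-- equitable colouring -/
def EQ (ι : Type*) [Fintype ι] (G : SimpleGraph V) (s : ℕ) : Prop :=
  ∃ f : V → ι, PropOn G univ f ∧ ∀ e, sz univ f e = s

def Ore (G : SimpleGraph V) (K : ℕ) : Prop :=
  ∀ x y, G.Adj x y → dg G univ x + dg G univ y + 1 ≤ 2 * K

def SubIH (V ι : Type*) [Fintype V] [Fintype ι] (s : ℕ) : Prop :=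
  ∀ (G : SimpleGraph V) (B : Finset V) (C : Finset ι), B.card < Fintype.card V → C.Nonempty →
    B.card = C.card * s →
    (∀ x ∈ B, ∀ y ∈ B, G.Adj x y → dg G B x + dg G B y + 1 ≤ 2 * C.card) →
    ∃ g : V → ι, (∀ v ∈ B, g v ∈ C) ∧ PropOn G B g ∧ ∀ c ∈ C, sz B g c = s

lemma mem_accS {G : SimpleGraph V} {f : V → ι} {a c : ι} :
    c ∈ accS G f a ↔ ReflTransGen (mov G f) c a := by simp [accS]

lemma mem_AV {G : SimpleGraph V} {f : V → ι} {a : ι} {v : V} :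
    v ∈ AV G f a ↔ f v ∈ accS G f a := by simp [AV]

lemma root_mem {G : SimpleGraph V} {f : V → ι} {a : ι} : a ∈ accS G f a :=
  mem_accS.2 ReflTransGen.refl

lemma dg_mono {G : SimpleGraph V} {S T : Finset V} (h : S ⊆ T) (x : V) : dg G S x ≤ dg G T x :=
  Finset.card_le_card (Finset.filter_subset_filter _ h)

lemma dg_union {G : SimpleGraph V} {S T : Finset V} (h : Disjoint S T) (x : V) :
    dg G (S ∪ T) x = dg G S x + dg G T x := by
  unfold dg
  rw [Finset.filter_union, Finset.card_union_of_disjoint]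
  exact Finset.disjoint_filter_filter h

lemma dg_compl (G : SimpleGraph V) (S : Finset V) (x : V) :
    dg G univ x = dg G S x + dg G Sᶜ x := by
  rw [← dg_union disjoint_compl_right, Finset.union_compl]

lemma dg_erase {G : SimpleGraph V} {S : Finset V} {v x : V} (hv : v ∈ S) :
    dg G S x = dg G (S.erase v) x + if G.Adj x v then 1 else 0 := by
  conv_lhs => rw [← Finset.insert_erase hv]
  unfold dg
  rw [Finset.filter_insert]
  split_ifs with h
  · rw [Finset.card_insert_of_notMem (by simp)]
  · rfl

lemma dg_sum {G : SimpleGraph V} {S : Finset V} {f : V → ι} {C : Finset ι}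
    (h : ∀ v ∈ S, f v ∈ C) (x : V) : dg G S x = ∑ c ∈ C, nb G S f x c := by
  unfold dg nb
  rw [Finset.card_eq_sum_card_fiberwise (f := f) (t := C)]
  · apply Finset.sum_congr rfl
    intro c _
    rw [Finset.filter_filter]
    congr 1
    ext v; simp [and_comm]
  · intro v hv
    simp only [coe_filter, Set.mem_ofPred_eq] at hv
    exact h v hv.1

lemma nb_pos {G : SimpleGraph V} {S : Finset V} {f : V → ι} {x : V} {c : ι} :
    1 ≤ nb G S f x c ↔ ∃ u ∈ S, f u = c ∧ G.Adj x u := by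
  unfold nb
  rw [Nat.succ_le_iff, Finset.card_pos]
  constructor
  · rintro ⟨u, hu⟩; exact ⟨u, by simpa using hu⟩
  · rintro ⟨u, hu⟩; exact ⟨u, by simpa using hu⟩

lemma sum_ge_card (C N : Finset ι) (hN : N ⊆ C) (F : ι → ℕ) (h1 : ∀ c ∈ C, 1 ≤ F c)
    (h2 : ∀ c ∈ N, 2 ≤ F c) : C.card + N.card ≤ ∑ c ∈ C, F c := by
  have : ∑ c ∈ C, (1 + if c ∈ N then 1 else 0) = C.card + N.card := by
    rw [Finset.sum_add_distrib]
    simp [Finset.inter_eq_right.2 hN]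
  rw [← this]
  apply Finset.sum_le_sum
  intro c hc
  split_ifs with h
  · exact h2 c h
  · exact h1 c hc

lemma dgA_ge {G : SimpleGraph V} {f : V → ι} {a : ι} {y : V} (hy : y ∉ AV G f a)
    (N : Finset ι) (hN : N ⊆ accS G f a) (h2 : ∀ c ∈ N, 2 ≤ nb G (AV G f a) f y c) :
    (accS G f a).card + N.card ≤ dg G (AV G f a) y := by
  rw [dg_sum (f := f) (C := accS G f a) (fun v hv => mem_AV.1 hv)]
  apply sum_ge_card _ _ hN _ _ h2
  intro c hc
  rw [nb_pos]
  by_contra! hcon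
  apply hy
  rw [mem_AV, mem_accS]
  refine ReflTransGen.head (b := c) ⟨?_, y, rfl, ?_⟩ (mem_accS.1 hc)
  · rintro h; exact hy (mem_AV.2 (h ▸ hc))
  · intro u hu
    exact hcon u (mem_AV.2 (hu ▸ hc)) hu

lemma dgA_ge' {G : SimpleGraph V} {f : V → ι} {a : ι} {y : V} (hy : y ∉ AV G f a) :
    (accS G f a).card ≤ dg G (AV G f a) y := by
  simpa using dgA_ge hy ∅ (by simp) (by simp)

lemma finish_shift {G : SimpleGraph V} {s : ℕ} {f : V → ι} {a b : ι} (h : NE G s f a b)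
    (hb : ReflTransGen (mov G f) b a) : EQ ι G s := by
  obtain ⟨f', h1, _, _, _, h5⟩ := shift G f h.1 a _ univ rfl b (mem_univ _)
    (ReflTransGen.mono (fun x y hxy => ⟨hxy, mem_univ _, mem_univ _⟩) _ _ hb)
  refine ⟨f', h1, fun e => ?_⟩
  have := h5 e
  have := h.2 e
  omega

lemma szA {G : SimpleGraph V} {f : V → ι} {a c : ι} (hc : c ∈ accS G f a) :
    sz (AV G f a) f c = sz univ f c := by
  unfold sz
  congr 1
  ext v
  simp only [mem_filter, mem_univ, true_and, mem_AV]
  constructor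
  · exact fun h => h.2
  · exact fun h => ⟨h ▸ hc, h⟩

lemma cardB {G : SimpleGraph V} {s : ℕ} {f : V → ι} {a b : ι} (h : NE G s f a b)
    (hb : b ∉ accS G f a) : (AV G f a)ᶜ.card = (accS G f a)ᶜ.card * s + 1 := by
  rw [Finset.card_eq_sum_card_fiberwise (f := f) (t := (accS G f a)ᶜ)]
  · have : ∀ c ∈ (accS G f a)ᶜ, ((AV G f a)ᶜ.filter (fun v => f v = c)).card
        = s + if c = b then 1 else 0 := by
      intro c hc
      rw [mem_compl] at hc
      have hca : c ≠ a := by rintro rfl; exact hc root_mem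
      have h2 := h.2 c
      rw [if_neg hca] at h2
      rw [← h2, add_zero]
      unfold sz
      congr 1
      ext v
      simp only [mem_filter, mem_compl, mem_univ, true_and, mem_AV]
      constructor
      · exact fun h => h.2
      · exact fun h => ⟨h ▸ hc, h⟩
    rw [Finset.sum_congr rfl this, Finset.sum_add_distrib]
    simp [hb]
  · intro v hv
    simpa [mem_AV] using hv

lemma getg {G : SimpleGraph V} {s : ℕ} {f : V → ι} {a b : ι} (ih : SubIH V ι s)
    (hO : Ore G (Fintype.card ι)) (h : NE G s f a b) (hb : b ∉ accS G f a) {y : V}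
    (hy : y ∉ AV G f a) :
    ∃ g : V → ι, (∀ v ∈ (AV G f a)ᶜ.erase y, g v ∉ accS G f a) ∧
      PropOn G ((AV G f a)ᶜ.erase y) g ∧
      ∀ c, c ∉ accS G f a → sz ((AV G f a)ᶜ.erase y) g c = s := by
  have hyc : y ∈ (AV G f a)ᶜ := by simpa using hy
  have hcard := cardB h hb
  have hK : (accS G f a).card + (accS G f a)ᶜ.card = Fintype.card ι := Finset.card_add_card_compl _
  obtain ⟨g, h1, h2, h3⟩ := ih G ((AV G f a)ᶜ.erase y) (accS G f a)ᶜ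
    (by
      have h1 := Finset.card_erase_lt_of_mem hyc
      have h2 := Finset.card_le_univ (AV G f a)ᶜ
      omega)
    ⟨b, by simpa using hb⟩
    (by rw [Finset.card_erase_of_mem hyc]; omega)
    (by
      intro u hu v hv huv
      have hu' : u ∉ AV G f a := by simpa using Finset.mem_of_mem_erase hu
      have hv' : v ∉ AV G f a := by simpa using Finset.mem_of_mem_erase hv
      have e1 := dgA_ge' hu'
      have e2 := dgA_ge' hv'
      have e3 := hO u v huv
      rw [dg_compl G (AV G f a) u, dg_compl G (AV G f a) v] at e3
      have e4 := dg_mono (G := G) (Finset.erase_subset y (AV G f a)ᶜ) u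
      have e5 := dg_mono (G := G) (Finset.erase_subset y (AV G f a)ᶜ) v
      omega)
  exact ⟨g, fun v hv => by simpa using h1 v hv, h2, fun c hc => h3 c (by simpa using hc)⟩

lemma assemble {G : SimpleGraph V} {s : ℕ} {a b : ι} (C : Finset ι) (ha : a ∈ C)
    {S T : Finset V} {f g : V → ι} (hu : S ∪ T = univ) (hd : Disjoint S T)
    (hf : PropOn G S f) (hg : PropOn G T g) (hfC : ∀ v ∈ S, f v ∈ C) (hgC : ∀ v ∈ T, g v ∉ C)
    (h1 : ∀ e ∈ C, sz S f e + (if e = a then 1 else 0) = s + if e = b then 1 else 0)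
    (h2 : ∀ e, e ∉ C → sz T g e = s + if e = b then 1 else 0) :
    NE G s (glue S f g) a b := by
  refine ⟨?_, ?_⟩
  · rw [← hu]; exact hf.glue hg C hfC hgC
  · intro e
    rw [← hu, sz_glue hd]
    by_cases he : e ∈ C
    · rw [sz_eq_zero (S := T) (f := g) (e := e) (fun v hv hve => hgC v hv (hve ▸ he))]
      have := h1 e he
      omega
    · rw [sz_eq_zero (S := S) (f := f) (e := e) (fun v hv hve => he (hve ▸ hfC v hv)), h2 e he]
      have : e ≠ a := by rintro rfl; exact he ha
      simp [this]

/-- terminal class -/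
def TermClass (G : SimpleGraph V) (f : V → ι) (a W : ι) : Prop :=
  W ∈ accS G f a ∧ ∀ c ∈ accS G f a, c ≠ W → ReflTransGen (avd (mov G f) W) c a

lemma avd_path {G : SimpleGraph V} {f : V → ι} {a W c : ι}
    (h : ReflTransGen (avd (mov G f) W) c a) :
    ReflTransGen (fun x y => (mov G f x y ∧ x ≠ W ∧ y ≠ W) ∧ x ∈ accS G f a ∧ y ∈ accS G f a)
      c a ∧ c ∈ accS G f a := by
  induction h using ReflTransGen.head_induction_on with
  | refl => exact ⟨ReflTransGen.refl, root_mem⟩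
  | @head x y hxy hy ih =>
    have : x ∈ accS G f a := mem_accS.2 (ReflTransGen.head hxy.1 (mem_accS.1 ih.2))
    exact ⟨ReflTransGen.head ⟨hxy, this, ih.2⟩ ih.1, this⟩

lemma claim1 {G : SimpleGraph V} {s : ℕ} {f : V → ι} {a b : ι} (ih : SubIH V ι s)
    (hO : Ore G (Fintype.card ι)) (h : NE G s f a b) (hb : b ∉ accS G f a) {W X : ι}
    (hW : TermClass G f a W) {z y : V} (hz : f z = W) (hy : y ∉ AV G f a)
    (hsolo : ∀ u, f u = W → G.Adj y u → u = z) (hX : X ∈ accS G f a) (hXW : X ≠ W)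
    (hmov : ∀ u, f u = X → ¬ G.Adj z u) : EQ ι G s := by
  obtain ⟨g, g1, g2, g3⟩ := getg ih hO h hb hy
  have hp := avd_path (hW.2 X hX hXW)
  obtain ⟨f', h1, h2, h3, h4, h5⟩ := shift G f h.1 a _ ((accS G f a).erase W) rfl X
    (by simp [hX, hXW]) (by
      refine ReflTransGen.mono ?_ _ _ hp.1
      rintro x y ⟨⟨hm, hx, hy⟩, hxc, hyc⟩
      exact ⟨hm, by simp [hx, hxc], by simp [hy, hyc]⟩)
  set A := AV G f a with hA
  set C := accS G f a with hC
  have hWC : W ∈ C := hW.1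
  have hzA : z ∈ A := mem_AV.2 (by rw [hz]; exact hWC)
  have hf'C : ∀ v ∈ A, f' v ∈ C := by
    intro v hv
    by_cases hvW : f v = W
    · rw [h2 v (by simp [hvW]), hvW]; exact hWC
    · exact Finset.mem_of_mem_erase (h3 v (by simp [hvW]; exact mem_AV.1 hv))
  have hf'nC : ∀ v, v ∉ A → f' v = f v := by
    intro v hv
    exact h2 v (fun h => hv (mem_AV.2 (Finset.mem_of_mem_erase h)))
  have hf'z : f' z = W := by rw [h2 z (by simp [hz]), hz]
  have hzy : z ≠ y := by rintro rfl; exact hy hzA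
  have p1 : PropOn G A (Function.update f' z X) := by
    have := ((h1.mono (subset_univ A)).mono (Finset.erase_subset z A)).ins (v := z) (c := X)
      (by simp) (fun u _ hu => hmov u (h4 u hu))
    rwa [Finset.insert_erase hzA] at this
  have p2 := p1.ins (v := y) (c := W) hy (by
    intro u hu huW hyu
    by_cases huz : u = z
    · subst huz; simp at huW; exact hXW huW
    · rw [Function.update_of_ne huz] at huW
      apply huz
      apply hsolo u _ hyu
      by_contra hne
      have := h3 u (by simp [hne]; exact mem_AV.1 hu)
      simp [huW] at this)
  have hfin := assemble (G := G) (s := s) (a := a) (b := a) C root_mem (S := insert y A)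
    (T := Aᶜ.erase y) (by
      ext v; by_cases hvA : v ∈ A <;> by_cases hvy : v = y <;> simp [hvA, hvy])
    (by
      rw [Finset.disjoint_left]
      intro v hv hv2
      simp only [mem_insert, mem_erase, mem_compl] at hv hv2
      tauto) p2 g2 (by
      intro v hv
      by_cases hvy : v = y
      · subst hvy; simpa using hWC
      · rw [Function.update_of_ne hvy]
        by_cases hvz : v = z
        · subst hvz; simpa using hX
        · rw [Function.update_of_ne hvz]
          exact hf'C v (by simpa [hvy] using hv)) g1 (by
      intro e he
      rw [sz_ins hy]
      have e1 := sz_ins (S := A.erase z) (f := f') (v := z) (c := X) (by simp) e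
      have e2 := sz_erase (S := A) (f := f') (v := z) hzA e
      rw [Finset.insert_erase hzA] at e1
      rw [hf'z] at e2
      have e3 := h5 e
      have e4 := h.2 e
      have e5 : sz A f' e = sz univ f' e := by
        unfold sz
        congr 1
        ext v
        simp only [mem_filter, mem_univ, true_and]
        constructor
        · exact fun h => h.2
        · intro hv
          refine ⟨?_, hv⟩
          by_contra hvA
          rw [hf'nC v hvA] at hv
          exact hvA (mem_AV.2 (hv ▸ he))
      have : e ≠ b := by rintro rfl; exact hb he
      rw [if_neg this] at e4
      omega) (by
      intro e he
      have : e ≠ a := by rintro rfl; exact he root_mem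
      rw [if_neg this, g3 e he, add_zero])
  exact finish_shift hfin ReflTransGen.refl
end Near
section Near2
open Classical

variable {V : Type*} {ι : Type*} [Fintype V] [Fintype ι]

lemma dgA_nonmov {G : SimpleGraph V} {f : V → ι} {a : ι} {z : V} (D : Finset ι)
    (hD : D ⊆ accS G f a)
    (hm : ∀ X ∈ D, ∃ u, f u = X ∧ G.Adj z u) :
    D.card ≤ dg G (AV G f a) z := by
  rw [dg_sum (f := f) (C := accS G f a) (fun v hv => mem_AV.1 hv)]
  calc D.card = ∑ c ∈ D, 1 := by simp
    _ ≤ ∑ c ∈ D, nb G (AV G f a) f z c := by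
      apply Finset.sum_le_sum
      intro c hc
      rw [nb_pos]
      obtain ⟨u, hu, hzu⟩ := hm c hc
      exact ⟨u, mem_AV.2 (hu ▸ hD hc), hu, hzu⟩
    _ ≤ _ := Finset.sum_le_sum_of_subset hD

/-- choosing how to place `z` into the coloured set. -/
lemma place {G : SimpleGraph V} {s : ℕ} {f : V → ι} {a b : ι}
    (hO : Ore G (Fintype.card ι)) (hb : b ∉ accS G f a) {W : ι}
    (hWC : W ∈ accS G f a) {z y : V} (hz : f z = W) (hy : y ∉ AV G f a) (hyz : G.Adj y z)
    (hnm : ∀ X ∈ accS G f a, X ≠ W → ∃ u, f u = X ∧ G.Adj z u)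
    {g : V → ι} (g1 : ∀ v ∈ (AV G f a)ᶜ.erase y, g v ∉ accS G f a)
    (g2 : PropOn G ((AV G f a)ᶜ.erase y) g)
    (g3 : ∀ c, c ∉ accS G f a → sz ((AV G f a)ᶜ.erase y) g c = s) :
    (∃ g' : V → ι, ∃ b', b' ∉ accS G f a ∧
      (∀ v ∈ insert z ((AV G f a)ᶜ.erase y), g' v ∉ accS G f a) ∧
      PropOn G (insert z ((AV G f a)ᶜ.erase y)) g' ∧
      ∀ c, c ∉ accS G f a → sz (insert z ((AV G f a)ᶜ.erase y)) g' c = s + if c = b' then 1 else 0)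
    ∨ (∃ g' : V → ι, ∃ v ∈ (AV G f a)ᶜ.erase y, (∀ u, f u = W → G.Adj v u → u = z) ∧
      ¬ G.Adj v y ∧
      (∀ x ∈ insert z (((AV G f a)ᶜ.erase y).erase v), g' x ∉ accS G f a) ∧
      PropOn G (insert z (((AV G f a)ᶜ.erase y).erase v)) g' ∧
      ∀ c, c ∉ accS G f a → sz (insert z (((AV G f a)ᶜ.erase y).erase v)) g' c = s) := by
  set A := AV G f a with hA
  set C := accS G f a with hC
  set B' := Aᶜ.erase y with hB'
  have hzA : z ∈ A := mem_AV.2 (by rw [hz]; exact hWC)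
  have hzB' : z ∉ B' := by simp [hB', hzA]
  have hyc : y ∈ Aᶜ := by simpa using hy
  have hK : C.card + Cᶜ.card = Fintype.card ι := Finset.card_add_card_compl _
  have hdy : C.card ≤ dg G A y := dgA_ge' hy
  have hdz : C.card ≤ dg G A z + 1 := by
    have := dgA_nonmov (G := G) (z := z) (C.erase W) (Finset.erase_subset _ _) (by
      intro X hX
      rw [mem_erase] at hX
      exact hnm X hX.2 hX.1)
    rw [Finset.card_erase_of_mem hWC] at this
    change _ ≤ dg G A z at this
    omega
  have hzdeg := dg_compl G A z
  have hydeg := dg_compl G A y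
  have hzB := dg_erase (G := G) (x := z) hyc
  rw [if_pos hyz.symm] at hzB
  change dg G Aᶜ z = dg G B' z + 1 at hzB
  have hOzy := hO z y hyz.symm
  have hsumz := dg_sum (G := G) (S := B') (f := g) (C := Cᶜ) (fun v hv => by simpa using g1 v hv) z
  by_cases hex : ∃ Y, Y ∉ C ∧ nb G B' g z Y = 0
  · obtain ⟨Y, hY, hYz⟩ := hex
    left
    refine ⟨Function.update g z Y, Y, hY, ?_, ?_, ?_⟩
    · intro v hv
      by_cases hvz : v = z
      · subst hvz; simpa using hY
      · rw [Function.update_of_ne hvz]; exact g1 v (by simpa [hvz] using hv)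
    · apply g2.ins hzB'
      intro u hu hgu hadj
      have : 1 ≤ nb G B' g z Y := nb_pos.2 ⟨u, hu, hgu, hadj⟩
      omega
    · intro c hc
      rw [sz_ins hzB', g3 c hc]
  push Not at hex
  have hge : Cᶜ.card ≤ dg G B' z := by
    rw [hsumz]
    simpa using sum_ge_card Cᶜ ∅ (by simp) (fun c => nb G B' g z c)
      (fun c hc => Nat.one_le_iff_ne_zero.2 (hex c (by simpa using hc))) (by simp)
  obtain ⟨Y, hY, hY1⟩ : ∃ Y, Y ∉ C ∧ nb G B' g z Y = 1 := by
    by_contra! hcon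
    have := sum_ge_card Cᶜ Cᶜ (by simp) (fun c => nb G B' g z c)
      (fun c hc => Nat.one_le_iff_ne_zero.2 (hex c (by simpa using hc)))
      (fun c hc => by
        have h1 := hex c (by simpa using hc)
        have h2 := hcon c (by simpa using hc)
        omega)
    rw [← hsumz] at this
    omega
  obtain ⟨v, hv⟩ := Finset.card_eq_one.1 hY1
  have hv' : ∀ u, (u ∈ B' ∧ g u = Y ∧ G.Adj z u) ↔ u = v := by
    intro u
    have h := Finset.ext_iff.1 hv u
    rw [mem_filter, mem_singleton] at h
    exact h
  obtain ⟨hvB, hgv, hzv⟩ := (hv' v).2 rfl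
  have hvA : v ∉ A := by
    have := Finset.mem_of_mem_erase hvB
    simpa using this
  have hvz : v ≠ z := hzv.ne'
  have hOzv := hO z v hzv
  have hvdeg := dg_compl G A v
  have hdv : C.card ≤ dg G A v := dgA_ge' hvA
  have hvB2 := dg_erase (G := G) (x := v) hyc
  change dg G Aᶜ v = dg G B' v + _ at hvB2
  have hzn : z ∉ B'.erase v := fun h => hzB' (Finset.mem_of_mem_erase h)
  have q1 : PropOn G (insert z (B'.erase v)) (Function.update g z Y) := by
    apply (g2.mono (Finset.erase_subset v B')).ins hzn
    intro u hu hgu hadj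
    exact (Finset.ne_of_mem_erase hu) ((hv' u).1 ⟨Finset.mem_of_mem_erase hu, hgu, hadj⟩)
  have q2 : ∀ c, c ∉ C → sz (insert z (B'.erase v)) (Function.update g z Y) c = s := by
    intro c hc
    rw [sz_ins hzn]
    have := sz_erase (f := g) hvB c
    rw [hgv, g3 c hc] at this
    exact this
  have q3 : ∀ u ∈ insert z (B'.erase v), Function.update g z Y u ∉ C := by
    intro u hu
    by_cases huz : u = z
    · subst huz; simpa using hY
    · rw [Function.update_of_ne huz]
      rw [mem_insert] at hu
      exact g1 u (Finset.mem_of_mem_erase (hu.resolve_left huz))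
  by_cases hcase : (∀ u, f u = W → G.Adj v u → u = z) ∧ ¬ G.Adj v y
  · right
    exact ⟨Function.update g z Y, v, hvB, hcase.1, hcase.2, q3, q1, q2⟩
  · left
    have hsmall : dg G B' v + 2 ≤ Cᶜ.card := by
      by_cases hvy : G.Adj v y
      · rw [if_pos hvy] at hvB2
        omega
      · have : ¬ (∀ u, f u = W → G.Adj v u → u = z) := fun h => hcase ⟨h, hvy⟩
        push Not at this
        obtain ⟨u, huW, hvu, huz⟩ := this
        have h2 := dgA_ge (G := G) (f := f) (a := a) hvA {W} (by simpa using hWC) (by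
          intro c hc
          rw [mem_singleton] at hc
          subst hc
          have : ({u, z} : Finset V).card ≤ nb G (AV G f a) f v c := by
            apply Finset.card_le_card
            intro x hx
            simp only [mem_insert, mem_singleton] at hx
            rw [mem_filter, mem_AV]
            rcases hx with rfl | rfl
            · exact ⟨huW ▸ hWC, huW, hvu⟩
            · exact ⟨hz ▸ hWC, hz, hzv.symm⟩
          rwa [Finset.card_pair huz] at this)
        rw [card_singleton] at h2
        change C.card + 1 ≤ dg G A v at h2
        omega
    obtain ⟨Y', hYpC, hYpY, hYp0⟩ : ∃ Y', Y' ∉ C ∧ Y' ≠ Y ∧ nb G B' g v Y' = 0 := by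
      by_contra! hcon
      have h1 := dg_sum (G := G) (S := B') (f := g) (C := Cᶜ)
        (fun v hv => by simpa using g1 v hv) v
      have h2 : ∑ c ∈ Cᶜ.erase Y, nb G B' g v c ≤ ∑ c ∈ Cᶜ, nb G B' g v c :=
        Finset.sum_le_sum_of_subset (Finset.erase_subset _ _)
      have h3 := sum_ge_card (Cᶜ.erase Y) ∅ (by simp) (fun c => nb G B' g v c)
        (fun c hc => by
          rw [mem_erase, mem_compl] at hc
          exact Nat.one_le_iff_ne_zero.2 (hcon c hc.2 hc.1)) (by simp)
      rw [Finset.card_erase_of_mem (by simpa using hY), card_empty] at h3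
      omega
    have hins : insert v (insert z (B'.erase v)) = insert z B' := by
      rw [Finset.insert_comm, Finset.insert_erase hvB]
    have hvn : v ∉ insert z (B'.erase v) := by simp [hvz]
    refine ⟨Function.update (Function.update g z Y) v Y', Y', hYpC, ?_, ?_, ?_⟩
    · intro u hu
      by_cases huv : u = v
      · subst huv; simpa using hYpC
      · rw [Function.update_of_ne huv]
        apply q3
        rw [← hins, mem_insert] at hu
        exact hu.resolve_left huv
    · rw [← hins]
      apply q1.ins hvn
      intro u hu hgu hadj
      by_cases huz : u = z
      · subst huz
        simp at hgu
        exact hYpY hgu.symm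
      · rw [Function.update_of_ne huz] at hgu
        rw [mem_insert] at hu
        have : 1 ≤ nb G B' g v Y' :=
          nb_pos.2 ⟨u, Finset.mem_of_mem_erase (hu.resolve_left huz), hgu, hadj⟩
        omega
    · intro c hc
      rw [← hins, sz_ins hvn, q2 c hc]

lemma claimS {G : SimpleGraph V} {s : ℕ} {f : V → ι} {a b : ι} (ih : SubIH V ι s)
    (hO : Ore G (Fintype.card ι)) (h : NE G s f a b) (hb : b ∉ accS G f a) {W : ι}
    (hWC : W ∈ accS G f a) {z y : V} (hz : f z = W) (hy : y ∉ AV G f a) (hyz : G.Adj y z)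
    (hsolo : ∀ u, f u = W → G.Adj y u → u = z)
    (hnm : ∀ X ∈ accS G f a, X ≠ W → ∃ u, f u = X ∧ G.Adj z u) :
    ∃ f' : V → ι, ∃ b', NE G s f' a b' ∧ (∀ v, f v ∈ accS G f a → v ≠ z → f' v = f v) ∧
      f' y = W ∧ f' z ∉ accS G f a ∧
      ∀ v, f v ∉ accS G f a → v ≠ y → (f' v ∉ accS G f a ∨ (b' = W ∧ f' v = W)) := by
  obtain ⟨g, g1, g2, g3⟩ := getg ih hO h hb hy
  have hpl := place hO hb hWC hz hy hyz hnm g1 g2 g3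
  set A := AV G f a with hA
  set C := accS G f a with hC
  set B' := Aᶜ.erase y with hB'
  have hzA : z ∈ A := mem_AV.2 (by rw [hz]; exact hWC)
  have hyz' : y ≠ z := hyz.ne
  have hyn : y ∉ A.erase z := fun h => hy (Finset.mem_of_mem_erase h)
  have haC : a ∈ C := root_mem
  have fA : ∀ v ∈ A.erase z, f v ∈ C := fun v hv => mem_AV.1 (Finset.mem_of_mem_erase hv)
  have p1 : PropOn G (insert y (A.erase z)) (Function.update f y W) := by
    apply (h.1.mono (subset_univ _)).ins hyn
    intro u hu hfu hadj
    exact Finset.ne_of_mem_erase hu (hsolo u hfu hadj)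
  have p2 : ∀ v ∈ insert y (A.erase z), Function.update f y W v ∈ C := by
    intro v hv
    by_cases hvy : v = y
    · subst hvy; simpa using hWC
    · rw [Function.update_of_ne hvy]
      rw [mem_insert] at hv
      exact fA v (hv.resolve_left hvy)
  have p3 : ∀ e ∈ C, sz (insert y (A.erase z)) (Function.update f y W) e
      + (if e = a then 1 else 0) = s := by
    intro e he
    rw [sz_ins hyn]
    have e1 := sz_erase (f := f) hzA e
    rw [hz] at e1
    have e2 : sz A f e = sz univ f e := szA he
    have e3 := h.2 e
    have : e ≠ b := by rintro rfl; exact hb he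
    rw [if_neg this] at e3
    omega
  rcases hpl with ⟨g', b', hb', r1, r2, r3⟩ | ⟨g', v, hvB, hv1, hv2, r1, r2, r3⟩
  · have hu : insert y (A.erase z) ∪ insert z B' = univ := by
      ext x
      by_cases hx : x ∈ A <;> by_cases hxy : x = y <;> by_cases hxz : x = z <;>
        simp [hB', hx, hxy, hxz]
    have hd : Disjoint (insert y (A.erase z)) (insert z B') := by
      rw [Finset.disjoint_left]
      intro x hx hx2
      simp only [hB', mem_insert, mem_erase, mem_compl] at hx hx2
      rcases hx with rfl | hx
      · rcases hx2 with h | h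
        · exact hyz' h
        · exact h.1 rfl
      · rcases hx2 with h | h
        · exact hx.1 h
        · exact h.2 hx.2
    refine ⟨glue (insert y (A.erase z)) (Function.update f y W) g', b',
      assemble C haC hu hd p1 r2 p2 r1 ?_ r3, ?_, ?_, ?_, ?_⟩
    · intro e he
      have : e ≠ b' := by rintro rfl; exact hb' he
      rw [if_neg this, p3 e he]; rfl
    · intro x hx hxz
      have hxA : x ∈ A := mem_AV.2 hx
      have hxy : x ≠ y := by rintro rfl; exact hy hxA
      simp [glue, hxA, hxz, hxy]
    · simp [glue]
    · have : z ∉ insert y (A.erase z) := by simp [hyz'.symm]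
      rw [glue, if_neg this]
      exact r1 z (by simp)
    · intro x hx hxy
      left
      have hxA : x ∉ A := fun h => hx (mem_AV.1 h)
      have : x ∉ insert y (A.erase z) := by simp [hxy, hxA]
      rw [glue, if_neg this]
      exact r1 x (by simp [hB', hxy, hxA])
  · have hvy : v ≠ y := Finset.ne_of_mem_erase hvB
    have hvA : v ∉ A := by simpa using Finset.mem_of_mem_erase hvB
    have hvz : v ≠ z := by rintro rfl; exact hvA hzA
    have hvn : v ∉ insert y (A.erase z) := by simp [hvy, hvA]
    set S := insert v (insert y (A.erase z)) with hS
    have hu : S ∪ insert z (B'.erase v) = univ := by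
      ext x
      by_cases hx : x ∈ A <;> by_cases hxy : x = y <;> by_cases hxz : x = z <;>
        by_cases hxv : x = v <;> simp [hS, hB', hx, hxy, hxz, hxv]
    have hd : Disjoint S (insert z (B'.erase v)) := by
      rw [Finset.disjoint_left]
      intro x hx hx2
      simp only [hS, hB', mem_insert, mem_erase, mem_compl] at hx hx2
      rcases hx2 with rfl | h
      · rcases hx with h | h | h
        · exact hvz h.symm
        · exact hyz' h.symm
        · exact h.1 rfl
      · rcases hx with h' | h' | h'
        · exact h.1 h'
        · exact h.2.1 h'
        · exact h.2.2 h'.2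
    have p1' : PropOn G S (Function.update (Function.update f y W) v W) := by
      apply p1.ins hvn
      intro u hu hfu hadj
      by_cases huy : u = y
      · subst huy; exact hv2 hadj
      · rw [Function.update_of_ne huy] at hfu
        rw [mem_insert] at hu
        exact Finset.ne_of_mem_erase (hu.resolve_left huy) (hv1 u hfu hadj)
    have p2' : ∀ x ∈ S, Function.update (Function.update f y W) v W x ∈ C := by
      intro x hx
      by_cases hxv : x = v
      · subst hxv; simpa using hWC
      · rw [Function.update_of_ne hxv]
        rw [hS, mem_insert] at hx
        exact p2 x (hx.resolve_left hxv)
    refine ⟨glue S (Function.update (Function.update f y W) v W) g', W,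
      assemble C haC hu hd p1' r2 p2' r1 ?_ ?_, ?_, ?_, ?_, ?_⟩
    · intro e he
      rw [hS, sz_ins hvn]
      have := p3 e he
      omega
    · intro e he
      have : e ≠ W := by rintro rfl; exact he hWC
      rw [if_neg this, r3 e he, add_zero]
    · intro x hx hxz
      have hxA : x ∈ A := mem_AV.2 hx
      have hxy : x ≠ y := by rintro rfl; exact hy hxA
      have hxv : x ≠ v := by rintro rfl; exact hvA hxA
      simp [glue, hS, hxA, hxz, hxy, hxv]
    · simp [glue, hS, Function.update_of_ne hvy.symm]
    · have : z ∉ S := by simp [hS, hyz'.symm, hvz.symm]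
      rw [glue, if_neg this]
      exact r1 z (by simp)
    · intro x hx hxy
      have hxA : x ∉ A := fun h => hx (mem_AV.1 h)
      by_cases hxv : x = v
      · right
        subst hxv
        simp [glue, hS]
      · left
        have : x ∉ S := by simp [hS, hxy, hxA, hxv]
        rw [glue, if_neg this]
        exact r1 x (by simp [hB', hxy, hxA, hxv])

lemma acc_transfer {G : SimpleGraph V} {f f' : V → ι} {a W : ι} (hW : TermClass G f a W) {z : V}
    (hz : f z = W)
    (hnm : ∀ X ∈ accS G f a, X ≠ W → ∃ u, f u = X ∧ G.Adj z u)
    (h1 : ∀ c ∈ accS G f a, c ≠ W → ∀ v, f' v = c ↔ f v = c)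
    (h2 : ∀ v, v ≠ z → f v = W → f' v = W) : accS G f a ⊆ accS G f' a := by
  have key : ∀ c ∈ accS G f a, c ≠ W → ReflTransGen (mov G f') c a := by
    intro c hc hcW
    refine ReflTransGen.mono ?_ _ _ (avd_path (hW.2 c hc hcW)).1
    rintro x y ⟨⟨⟨hxy, v, hv, hvu⟩, hxW, hyW⟩, hx, hy⟩
    exact ⟨hxy, v, (h1 x hx hxW v).2 hv, fun u hu => hvu u ((h1 y hy hyW u).1 hu)⟩
  intro c hc
  rw [mem_accS]
  by_cases hcW : c = W
  · subst hcW
    rcases ReflTransGen.cases_head (mem_accS.1 hc) with h | ⟨X, ⟨hcX, w, hw, hwu⟩, hX⟩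
    · rw [h]
    · have hXC : X ∈ accS G f a := mem_accS.2 hX
      have hwz : w ≠ z := by
        rintro rfl
        obtain ⟨u, hu, hadj⟩ := hnm X hXC hcX.symm
        exact hwu u hu hadj
      refine ReflTransGen.head (b := X) ⟨hcX, w, h2 w hwz hw, ?_⟩ (key X hXC hcX.symm)
      intro u hu
      exact hwu u ((h1 X hXC hcX.symm u).1 hu)
  · exact key c hc hcW

/-- number of edges leaving `A` -/
noncomputable def cut (G : SimpleGraph V) (A : Finset V) : ℕ := ∑ x ∈ A, dg G Aᶜ x

lemma sum_dg_insert {G : SimpleGraph V} {S T : Finset V} {v : V} (hv : v ∉ T) :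
    ∑ x ∈ S, dg G (insert v T) x = ∑ x ∈ S, dg G T x + dg G S v := by
  have : ∀ x ∈ S, dg G (insert v T) x = dg G T x + if G.Adj v x then 1 else 0 := by
    intro x _
    rw [dg_erase (Finset.mem_insert_self v T), Finset.erase_insert hv]
    simp [G.adj_comm]
  rw [Finset.sum_congr rfl this, Finset.sum_add_distrib]
  congr 1
  unfold dg
  rw [Finset.card_filter]

lemma cut_swap {G : SimpleGraph V} {A : Finset V} {z y : V} (hz : z ∈ A) (hy : y ∉ A)
    (hyz : G.Adj y z) :
    cut G (insert y (A.erase z)) + dg G Aᶜ z + dg G A y = cut G A + dg G A z + dg G Aᶜ y + 2 := by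
  have hyz' := hyz.ne
  set A0 := A.erase z with hA0
  set B0 := Aᶜ.erase y with hB0
  have hyc : y ∈ Aᶜ := by simpa using hy
  have eA : A = insert z A0 := (Finset.insert_erase hz).symm
  have eB : Aᶜ = insert y B0 := (Finset.insert_erase hyc).symm
  have eB' : (insert y A0)ᶜ = insert z B0 := by
    ext x
    simp only [hA0, hB0, mem_compl, mem_insert, mem_erase]
    by_cases hxz : x = z
    · subst hxz; simp [hyz'.symm]
    · simp [hxz]
  have hzA0 : z ∉ A0 := by simp [hA0]
  have hyB0 : y ∉ B0 := by simp [hB0]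
  have hyA0 : y ∉ A0 := by simp [hA0, hy]
  have hzB0 : z ∉ B0 := by simp [hB0, hz]
  have c1 : cut G A = ∑ x ∈ A0, dg G B0 x + dg G A0 y + dg G B0 z + 1 := by
    unfold cut
    rw [eB]
    conv_lhs => rw [eA]
    rw [Finset.sum_insert hzA0, sum_dg_insert hyB0, dg_erase (Finset.mem_insert_self y B0),
      Finset.erase_insert hyB0, if_pos hyz.symm]
    ring
  have c2 : cut G (insert y A0) = ∑ x ∈ A0, dg G B0 x + dg G A0 z + dg G B0 y + 1 := by
    unfold cut
    rw [eB']
    rw [Finset.sum_insert hyA0, sum_dg_insert hzB0, dg_erase (Finset.mem_insert_self z B0),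
      Finset.erase_insert hzB0, if_pos hyz]
    ring
  have d1 := dg_erase (G := G) (x := z) hyc
  have d2 := dg_erase (G := G) (x := y) hyc
  have d3 := dg_erase (G := G) (x := z) hz
  have d4 := dg_erase (G := G) (x := y) hz
  rw [if_pos hyz.symm] at d1
  rw [if_neg (G.irrefl)] at d2 d3
  rw [if_pos hyz] at d4
  simp only [← hA0, ← hB0] at d1 d2 d3 d4
  omega
end Near2
section Near3
open Classical

variable {V : Type*} {ι : Type*} [Fintype V] [Fintype ι]

lemma weight_arith (q t n : ℚ) (hq : 0 < q) (hn : 0 ≤ n) (hnt : n ≤ t)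
    (h : n < t → n < q) :
    t / q ≤ n * (2 / (2 * q + t - n)) + (t - n) * (1 / (q - n)) := by
  rcases hnt.eq_or_lt with rfl | hlt
  · have : 2 * q + n - n = 2 * q := by ring
    rw [this]
    have : n * (2 / (2 * q)) = n / q := by field_simp
    rw [this]; simp
  · have hq' : 0 < q - n := sub_pos.2 (h hlt)
    have h2 : 0 < 2 * q + t - n := by linarith
    rw [← sub_nonneg]
    have : n * (2 / (2 * q + t - n)) + (t - n) * (1 / (q - n)) - t / q =
        n * ((q + t) * (t - n)) / ((2 * q + t - n) * (q - n) * q) := by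
      field_simp
      ring
    rw [this]
    have h3 : 0 ≤ t - n := by linarith
    have h4 : 0 ≤ t := by linarith
    positivity

lemma count_contra {G : SimpleGraph V} {s : ℕ} {f : V → ι} {a b : ι}
    (hO : Ore G (Fintype.card ι)) (h : NE G s f a b) (hb : b ∉ accS G f a)
    (T : Finset ι) (U : ι) (hTn : T.Nonempty) (hTC : T ⊆ accS G f a)
    (hTU : ∀ W ∈ T, ∀ X ∈ accS G f a, mov G f W X → X ∈ T ∨ X = U)
    (hkey : ∀ W ∈ T, ∀ z y, f z = W → y ∉ AV G f a → G.Adj y z →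
      (∀ u, f u = W → G.Adj y u → u = z) →
      dg G (AV G f a)ᶜ z + dg G (AV G f a) y ≤ Fintype.card ι) : False := by
  have hcB := cardB h hb
  set A := AV G f a with hA
  set C := accS G f a with hC
  have hK : C.card + Cᶜ.card = Fintype.card ι := Finset.card_add_card_compl _
  have hq : 0 < Cᶜ.card := Finset.card_pos.2 ⟨b, by simpa using hb⟩
  have ht : 0 < T.card := Finset.card_pos.2 hTn
  set q := Cᶜ.card with hqd
  set t := T.card with htd
  set X := univ.filter (fun x => f x ∈ T) with hX
  have hXc : X.card ≤ t * s := by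
    rw [Finset.card_eq_sum_card_fiberwise (f := f) (t := T) (by intro x hx; simpa [hX] using hx)]
    rw [htd, ← smul_eq_mul, ← Finset.sum_const]
    apply Finset.sum_le_sum
    intro W hW
    have h2 := h.2 W
    have : W ≠ b := by rintro rfl; exact hb (hTC hW)
    rw [if_neg this] at h2
    have : (X.filter (fun x => f x = W)).card ≤ sz univ f W := by
      unfold sz
      apply Finset.card_le_card
      intro x hx
      simp only [mem_filter, mem_univ, true_and] at hx ⊢
      exact hx.2
    omega
  -- lower bound on dg A x
  have hxA : ∀ x ∈ X, C.card ≤ dg G A x + t + 1 := by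
    intro x hx
    have hx' : f x ∈ T := by simpa [hX] using hx
    have h1 := dgA_nonmov (G := G) (f := f) (a := a) (z := x) ((C \ T).erase U)
      ((Finset.erase_subset _ _).trans Finset.sdiff_subset) (by
        intro Y hY
        rw [mem_erase, mem_sdiff] at hY
        by_contra! hcon
        rcases hTU (f x) hx' Y hY.2.1 ⟨by rintro h; exact hY.2.2 (h ▸ hx'), x, rfl, hcon⟩ with h | h
        · exact hY.2.2 h
        · exact hY.1 h)
    have h2 := Finset.pred_card_le_card_erase (s := C \ T) (a := U)
    have h3 := Finset.card_sdiff_add_card_eq_card hTC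
    change _ ≤ dg G A x at h1
    omega
  -- weights
  set w : V → ℚ := fun x => 1 / (dg G Aᶜ x : ℚ) with hw
  have hw0 : ∀ x, 0 ≤ w x := fun x => by rw [hw]; positivity
  have hup : ∑ x ∈ X, ∑ y ∈ Aᶜ.filter (G.Adj x), w x ≤ X.card := by
    calc ∑ x ∈ X, ∑ y ∈ Aᶜ.filter (G.Adj x), w x ≤ ∑ x ∈ X, (1 : ℚ) := by
          apply Finset.sum_le_sum
          intro x _
          rw [Finset.sum_const, nsmul_eq_mul, hw]
          change (dg G Aᶜ x : ℚ) * (1 / (dg G Aᶜ x : ℚ)) ≤ 1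
          rw [mul_one_div]
          exact div_self_le_one _
      _ = X.card := by simp
  have hswap : ∑ x ∈ X, ∑ y ∈ Aᶜ.filter (G.Adj x), w x =
      ∑ y ∈ Aᶜ, ∑ x ∈ X.filter (fun x => G.Adj y x), w x := by
    apply Finset.sum_comm'
    intro x y
    simp only [mem_filter, G.adj_comm x y]
    tauto
  have hlow : ∀ y ∈ Aᶜ, (t : ℚ) / q ≤ ∑ x ∈ X.filter (fun x => G.Adj y x), w x := by
    intro y hy
    have hyA : y ∉ A := by simpa using hy
    set N := T.filter (fun W => 2 ≤ nb G A f y W) with hN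
    have hNT : N ⊆ T := Finset.filter_subset _ _
    have hdy : C.card + N.card ≤ dg G A y :=
      dgA_ge hyA N (hNT.trans hTC) (fun c hc => (mem_filter.1 hc).2)
    set n := N.card with hn
    have hnt : n ≤ t := Finset.card_le_card hNT
    have hdy2 := dg_compl G A y
    have hposd : ∀ x, G.Adj y x → 1 ≤ dg G Aᶜ x := by
      intro x hyx
      exact Finset.card_pos.2 ⟨y, by simp [hyA, hyx.symm]⟩
    have hbig : ∀ x ∈ X, G.Adj y x → 1 / (2 * q + t - n : ℚ) ≤ w x := by
      intro x hx hyx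
      have h1 := hxA x hx
      have h2 := hO y x hyx
      have h3 := dg_compl G A x
      have h4 : dg G Aᶜ x + n ≤ 2 * q + t := by omega
      have h5 := hposd x hyx
      apply one_div_le_one_div_of_le
      · exact_mod_cast h5
      · have : (dg G Aᶜ x : ℚ) + n ≤ 2 * q + t := by exact_mod_cast h4
        linarith
    have hsolo : ∀ W ∈ T, W ∉ N → ∃ z, f z = W ∧ G.Adj y z ∧ dg G Aᶜ z + n ≤ q := by
      intro W hW hWN
      have hWC := hTC hW
      have h1 : ¬ 2 ≤ nb G A f y W := fun h => hWN (mem_filter.2 ⟨hW, h⟩)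
      have h2 : 1 ≤ nb G A f y W := by
        rw [nb_pos]
        by_contra! hcon
        apply hyA
        rw [hA, mem_AV, mem_accS]
        refine ReflTransGen.head (b := W) ⟨?_, y, rfl, ?_⟩ (mem_accS.1 hWC)
        · rintro h; exact hyA (mem_AV.2 (h ▸ hWC))
        · intro u hu
          exact hcon u (mem_AV.2 (hu ▸ hWC)) hu
      obtain ⟨z, hz⟩ := Finset.card_eq_one.1 (show nb G A f y W = 1 by omega)
      have hz' : ∀ u, (u ∈ A ∧ f u = W ∧ G.Adj y u) ↔ u = z := by
        intro u
        have h := Finset.ext_iff.1 hz u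
        rw [mem_filter, mem_singleton] at h
        exact h
      obtain ⟨hzA, hfz, hyz⟩ := (hz' z).2 rfl
      have := hkey W hW z y hfz hyA hyz
        (fun u hu hyu => (hz' u).1 ⟨mem_AV.2 (hu ▸ hWC), hu, hyu⟩)
      exact ⟨z, hfz, hyz, by omega⟩
    have hnq : n < t → n < q := by
      intro hlt
      obtain ⟨W, hW, hWN⟩ := Finset.exists_mem_notMem_of_card_lt_card hlt
      obtain ⟨z, _, hyz, hz⟩ := hsolo W hW hWN
      have := hposd z hyz
      omega
    have har := weight_arith q t n (by exact_mod_cast hq) (by positivity) (by exact_mod_cast hnt)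
      (by exact_mod_cast hnq)
    refine har.trans ?_
    have hfib : ∑ x ∈ X.filter (fun x => G.Adj y x), w x =
        ∑ W ∈ T, ∑ x ∈ (X.filter (fun x => G.Adj y x)).filter (fun x => f x = W), w x := by
      have hmaps : ∀ x ∈ X.filter (fun x => G.Adj y x), f x ∈ T := by
        intro x hx
        have := (mem_filter.1 hx).1
        simpa [hX] using this
      have := Finset.sum_fiberwise_of_maps_to hmaps w
      rw [← this]
    rw [hfib]
    have hTs : (n * (2 / (2 * q + t - n)) + (t - n) * (1 / (q - n)) : ℚ) =
        ∑ W ∈ T, if W ∈ N then (2 / (2 * q + t - n) : ℚ) else 1 / (q - n) := by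
      rw [Finset.sum_ite, Finset.sum_const, Finset.sum_const, nsmul_eq_mul, nsmul_eq_mul]
      have e1 : T.filter (fun W => W ∈ N) = N := by
        rw [Finset.filter_mem_eq_inter, Finset.inter_eq_right.2 hNT]
      have e2 : T.filter (fun W => W ∉ N) = T \ N := by
        ext; simp
      rw [e1, e2, Finset.cast_card_sdiff hNT]
    rw [hTs]
    apply Finset.sum_le_sum
    intro W hW
    split_ifs with hWN
    · have h2 : 2 ≤ ((X.filter (fun x => G.Adj y x)).filter (fun x => f x = W)).card := by
        refine (mem_filter.1 hWN).2.trans (Finset.card_le_card ?_)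
        intro x hx
        simp only [mem_filter, hX, mem_univ, true_and] at hx ⊢
        exact ⟨⟨hx.2.1 ▸ hW, hx.2.2⟩, hx.2.1⟩
      have h3 := Finset.card_nsmul_le_sum
        ((X.filter (fun x => G.Adj y x)).filter (fun x => f x = W)) w (1 / (2 * q + t - n : ℚ))
        (by
          intro x hx
          simp only [mem_filter] at hx
          exact hbig x hx.1.1 hx.1.2)
      refine le_trans ?_ h3
      rw [nsmul_eq_mul]
      have h4 : (2 : ℚ) ≤ ((X.filter (fun x => G.Adj y x)).filter (fun x => f x = W)).card := by
        exact_mod_cast h2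
      have h5 : (0 : ℚ) ≤ 1 / (2 * q + t - n : ℚ) := by
        have : (n : ℚ) ≤ t := by exact_mod_cast hnt
        have h0 : (0 : ℚ) ≤ q := by positivity
        apply one_div_nonneg.2
        linarith
      calc (2 / (2 * q + t - n) : ℚ) = 2 * (1 / (2 * q + t - n : ℚ)) := by ring
        _ ≤ _ := mul_le_mul_of_nonneg_right h4 h5
    · obtain ⟨z, hfz, hyz, hz⟩ := hsolo W hW hWN
      have hzm : z ∈ (X.filter (fun x => G.Adj y x)).filter (fun x => f x = W) := by
        simp only [mem_filter, hX, mem_univ, true_and]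
        exact ⟨⟨hfz ▸ hW, hyz⟩, hfz⟩
      refine le_trans ?_ (Finset.single_le_sum (f := w) (fun x _ => hw0 x) hzm)
      apply one_div_le_one_div_of_le
      · exact_mod_cast hposd z hyz
      · have : (dg G Aᶜ z : ℚ) + n ≤ q := by exact_mod_cast hz
        linarith
  have hfin : (Aᶜ.card : ℚ) * (t / q) ≤ t * s := by
    have h1 := Finset.card_nsmul_le_sum _ _ _ hlow
    rw [nsmul_eq_mul, ← hswap] at h1
    refine h1.trans (hup.trans ?_)
    exact_mod_cast hXc
  rw [hcB] at hfin
  push_cast at hfin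
  have hq' : (0 : ℚ) < q := by exact_mod_cast hq
  have ht' : (0 : ℚ) < t := by exact_mod_cast ht
  rw [← mul_div_assoc, div_le_iff₀ hq'] at hfin
  nlinarith

lemma near_to_EQ {G : SimpleGraph V} {s : ℕ} (ih : SubIH V ι s)
    (hO : Ore G (Fintype.card ι)) (hne : ∃ f : V → ι, ∃ a b, NE G s f a b) : EQ ι G s := by
  by_contra hEQ
  obtain ⟨f0, a0, b0, h0⟩ := hne
  obtain ⟨⟨f, a, b⟩, hm, hmin⟩ := Finset.exists_min_image
    (univ.filter (fun p : (V → ι) × ι × ι => NE G s p.1 p.2.1 p.2.2))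
    (fun p => toLex (Fintype.card ι - (accS G p.1 p.2.1).card, cut G (AV G p.1 p.2.1)))
    ⟨(f0, a0, b0), by simpa using h0⟩
  simp only [mem_filter, mem_univ, true_and] at hm hmin
  have h : NE G s f a b := hm
  have hopt : ∀ f' b', NE G s f' a b' → accS G f a ⊆ accS G f' a →
      accS G f' a = accS G f a ∧ cut G (AV G f a) ≤ cut G (AV G f' a) := by
    intro f' b' h' hsub
    have h1 := hmin (f', a, b') h'
    rw [Prod.Lex.toLex_le_toLex] at h1
    have hc := Finset.card_le_univ (accS G f' a)
    have hle := Finset.card_le_card hsub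
    simp only at h1
    have hcc : (accS G f' a).card ≤ (accS G f a).card := by
      rcases h1 with h1 | h1 <;> omega
    refine ⟨(Finset.eq_of_subset_of_card_le hsub hcc).symm, ?_⟩
    rcases h1 with h1 | h1
    · omega
    · exact h1.2
  have hb : b ∉ accS G f a := fun hb => hEQ (finish_shift h (mem_accS.1 hb))
  obtain ⟨T, U, hTn, hT1, hT2, hT3⟩ := exists_terminal (mov G f) a
  refine count_contra hO h hb T U hTn (fun W hW => mem_accS.2 (hT1 W hW))
    (fun W hW X hX => hT3 W hW X (mem_accS.1 hX)) ?_
  intro W hWT z y hz hy hyz hsolo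
  have hWC : W ∈ accS G f a := mem_accS.2 (hT1 W hWT)
  have hW : TermClass G f a W := ⟨hWC, fun c hc hcW => hT2 W hWT c (mem_accS.1 hc) hcW⟩
  have hnm : ∀ X ∈ accS G f a, X ≠ W → ∃ u, f u = X ∧ G.Adj z u := by
    intro X hX hXW
    by_contra! hcon
    exact hEQ (claim1 ih hO h hb hW hz hy hsolo hX hXW hcon)
  obtain ⟨f', b', h', k1, k2, k3, k4⟩ := claimS ih hO h hb hWC hz hy hyz hsolo hnm
  have hfy : f y ∉ accS G f a := fun hh => hy (mem_AV.2 hh)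
  have t1 : ∀ c ∈ accS G f a, c ≠ W → ∀ v, f' v = c ↔ f v = c := by
    intro c hc hcW v
    by_cases hv : f v ∈ accS G f a
    · by_cases hvz : v = z
      · subst hvz
        constructor
        · rintro rfl; exact absurd hc k3
        · intro hh; exact absurd (hh.symm.trans hz) hcW
      · rw [k1 v hv hvz]
    · constructor
      · intro hh
        by_cases hvy : v = y
        · subst hvy; exact absurd (hh.symm.trans k2) hcW
        · rcases k4 v hv hvy with hk | hk
          · exact absurd (hh ▸ hc) hk
          · exact absurd (hh.symm.trans hk.2) hcW
      · rintro rfl; exact absurd hc hv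
  have t2 : ∀ v, v ≠ z → f v = W → f' v = W := by
    intro v hvz hv
    rw [k1 v (hv ▸ hWC) hvz, hv]
  have hsub := acc_transfer hW hz hnm t1 t2
  have hbpW : b' ≠ W := by
    rintro rfl
    exact hEQ (finish_shift h' (mem_accS.1 (hsub hWC)))
  obtain ⟨hacc, hcut⟩ := hopt f' b' h' hsub
  have hAV : AV G f' a = insert y ((AV G f a).erase z) := by
    ext v
    rw [mem_AV, hacc, mem_insert, mem_erase, mem_AV]
    by_cases hvy : v = y
    · subst hvy; simp [k2, hWC]
    by_cases hvz : v = z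
    · subst hvz; simp [k3, hvy]
    by_cases hv : f v ∈ accS G f a
    · simp [k1 v hv hvz, hv, hvz]
    · rcases k4 v hv hvy with hk | hk
      · simp [hk, hv, hvy]
      · exact absurd hk.1 hbpW
  rw [hAV] at hcut
  have hzA : z ∈ AV G f a := mem_AV.2 (hz ▸ hWC)
  have hs := cut_swap hzA hy hyz
  have o1 := hO y z hyz
  have o2 := dg_compl G (AV G f a) z
  have o3 := dg_compl G (AV G f a) y
  omega
end Near3
section MainThm
open Classical

lemma card_filter_sub {V : Type*} (B : Finset V) (p : V → Prop) :
    ((univ : Finset B).filter (fun v => p v.1)).card = (B.filter p).card := by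
  apply Finset.card_bij (fun v _ => v.1)
  · intro v hv
    simp only [mem_filter, mem_univ, true_and] at hv ⊢
    exact ⟨v.2, hv⟩
  · intro v _ w _ h
    exact Subtype.ext h
  · intro v hv
    rw [mem_filter] at hv
    exact ⟨⟨v, hv.1⟩, by simpa using hv.2, rfl⟩

lemma sub_ih {V : Type} [Fintype V] {ι : Type} [Fintype ι] {s : ℕ}
    (IH : ∀ (V' : Type) [Fintype V'], Fintype.card V' < Fintype.card V →
      ∀ (G : SimpleGraph V') (K : ℕ), Fintype.card V' = K * s → Ore G K → EQ (Fin K) G s) :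
    SubIH V ι s := by
  intro G B C hBc hC hcard hO
  obtain ⟨f, f1, f2⟩ := IH B (by simpa using hBc) (G.comap Subtype.val) C.card (by simpa using hcard)
    (by
      intro x y hxy
      have e : ∀ x : B, dg (G.comap Subtype.val) univ x = dg G B x.1 := by
        intro x
        unfold dg
        exact card_filter_sub B (G.Adj x.1)
      rw [e, e]
      exact hO x.1 x.2 y.1 y.2 hxy)
  obtain ⟨c0, hc0⟩ := hC
  refine ⟨fun v => if h : v ∈ B then (C.equivFin.symm (f ⟨v, h⟩)).1 else c0, ?_, ?_, ?_⟩
  · intro v hv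
    simp [hv]
  · intro x hx y hy hxy h
    simp only [hx, hy, dif_pos] at h
    exact f1 ⟨x, hx⟩ (mem_univ _) ⟨y, hy⟩ (mem_univ _) hxy
      (C.equivFin.symm.injective (Subtype.ext h))
  · intro c hc
    rw [← f2 (C.equivFin ⟨c, hc⟩)]
    unfold sz
    rw [← card_filter_sub]
    congr 1
    ext v
    simp only [mem_filter, mem_univ, true_and, v.2, dif_pos]
    rw [← Equiv.symm_apply_eq, Subtype.ext_iff]

lemma EQ_noedge {V : Type} [Fintype V] {s K : ℕ} (G : SimpleGraph V)
    (hc : Fintype.card V = K * s) (hG : ∀ x y, ¬ G.Adj x y) : EQ (Fin K) G s := by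
  have e : V ≃ Fin K × Fin s := Fintype.equivOfCardEq (by simp [hc])
  refine ⟨fun v => (e v).1, fun x _ y _ h => absurd h (hG x y), fun c => ?_⟩
  have : (univ : Finset (Fin s)).card = s := by simp
  unfold sz
  conv_rhs => rw [← this]
  symm
  apply Finset.card_bij (fun j _ => e.symm (c, j))
  · intro j _; simp
  · intro j _ k _ h
    simpa using h
  · intro v hv
    simp only [mem_filter, mem_univ, true_and] at hv
    exact ⟨(e v).2, mem_univ _, by rw [← hv]; simp⟩

lemma EQ_step {V : Type} [Fintype V] {ι : Type} [Fintype ι] {s : ℕ} (G : SimpleGraph V) (hO : Ore G (Fintype.card ι))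
    (ih : SubIH V ι s) {x y : V} (hxy : G.Adj x y) (hx : dg G univ x + 1 ≤ Fintype.card ι)
    (hE : EQ ι (G.deleteEdges {s(x, y)}) s) : EQ ι G s := by
  obtain ⟨f, f1, f2⟩ := hE
  have hadj : ∀ u v, G.Adj u v → u ≠ x → v ≠ x → (G.deleteEdges {s(x, y)}).Adj u v := by
    intro u v huv hu hv
    rw [SimpleGraph.deleteEdges_adj]
    refine ⟨huv, ?_⟩
    simp only [Set.mem_singleton_iff, Sym2.eq_iff]
    tauto
  by_cases hf : f x = f y
  · obtain ⟨W, hW, hW0⟩ : ∃ W, W ≠ f x ∧ nb G univ f x W = 0 := by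
      by_contra! hcon
      have h1 := dg_sum (G := G) (S := univ) (f := f) (C := univ) (fun v _ => mem_univ _) x
      have h2 := Finset.add_sum_erase univ (fun c => nb G univ f x c) (mem_univ (f x))
      have h3 := sum_ge_card (univ.erase (f x)) ∅ (by simp) (fun c => nb G univ f x c)
        (fun c hc => Nat.one_le_iff_ne_zero.2 (hcon c (Finset.ne_of_mem_erase hc))) (by simp)
      have h4 : 1 ≤ nb G univ f x (f x) := nb_pos.2 ⟨y, mem_univ _, hf.symm, hxy⟩
      rw [Finset.card_erase_of_mem (mem_univ _)] at h3
      simp only [card_univ, card_empty] at h3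
      omega
    apply near_to_EQ ih hO
    have hxn : x ∉ univ.erase x := by simp
    have hins : insert x (univ.erase x) = univ := Finset.insert_erase (mem_univ x)
    refine ⟨Function.update f x W, f x, W, ?_, ?_⟩
    · rw [← hins]
      apply PropOn.ins ?_ hxn
      · intro u hu hfu hxu
        have : 1 ≤ nb G univ f x W := nb_pos.2 ⟨u, mem_univ _, hfu, hxu⟩
        omega
      · intro u hu v hv huv
        exact f1 u (mem_univ _) v (mem_univ _)
          (hadj u v huv (Finset.ne_of_mem_erase hu) (Finset.ne_of_mem_erase hv))
    · intro e
      have h1 := sz_erase (f := f) (mem_univ x) e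
      have h2 := sz_ins (f := f) (c := W) hxn e
      rw [hins] at h2
      have := f2 e
      omega
  · refine ⟨f, ?_, f2⟩
    intro u _ v _ huv
    by_cases h : s(u, v) = s(x, y)
    · rw [Sym2.eq_iff] at h
      rcases h with ⟨rfl, rfl⟩ | ⟨rfl, rfl⟩
      · exact hf
      · exact fun h => hf h.symm
    · exact f1 u (mem_univ _) v (mem_univ _) (by
        rw [SimpleGraph.deleteEdges_adj]
        exact ⟨huv, by simpa using h⟩)

lemma EQ_edges {V : Type} [Fintype V] {s K : ℕ} (hc : Fintype.card V = K * s)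
    (ih : SubIH V (Fin K) s) : ∀ (m : ℕ) (G : SimpleGraph V),
      G.edgeSet.ncard = m → Ore G K → EQ (Fin K) G s := by
  intro m
  induction m using Nat.strong_induction_on with
  | _ m IH =>
    intro G hm hO
    by_cases hG : ∀ x y, ¬ G.Adj x y
    · exact EQ_noedge G hc hG
    push Not at hG
    obtain ⟨x, y, hxy⟩ := hG
    have key : ∀ x y, G.Adj x y → EQ (Fin K) (G.deleteEdges {s(x, y)}) s := by
      intro x y hxy
      refine IH _ ?_ _ rfl ?_
      · rw [← hm]
        apply Set.ncard_lt_ncard _ (Set.toFinite _)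
        rw [SimpleGraph.edgeSet_deleteEdges]
        refine ⟨Set.sdiff_subset, fun h => ?_⟩
        have := h (show s(x, y) ∈ G.edgeSet from hxy)
        simp at this
      · intro u v huv
        have hle : ∀ w, dg (G.deleteEdges {s(x, y)}) univ w ≤ dg G univ w := by
          intro w
          apply Finset.card_le_card
          intro t ht
          simp only [mem_filter, mem_univ, true_and, SimpleGraph.deleteEdges_adj] at ht ⊢
          exact ht.1
        have h1 := hle u
        have h2 := hle v
        have h3 := hO u v (SimpleGraph.deleteEdges_adj.1 huv).1
        omega
    have h := hO x y hxy
    by_cases hx : dg G univ x + 1 ≤ K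
    · exact EQ_step G (by simpa using hO) ih hxy (by simpa using hx) (key x y hxy)
    · exact EQ_step G (by simpa using hO) ih hxy.symm (by rw [Fintype.card_fin]; omega) (key y x hxy.symm)

lemma EQ_main (s : ℕ) : ∀ (N : ℕ) (V : Type) [Fintype V], Fintype.card V = N →
    ∀ (G : SimpleGraph V) (K : ℕ), Fintype.card V = K * s → Ore G K → EQ (Fin K) G s := by
  intro N
  induction N using Nat.strong_induction_on with
  | _ N IH =>
    intro V _ hN G K hc hO
    refine EQ_edges hc (sub_ih ?_) _ G rfl hO
    intro V' _ hlt G' K' hc' hO'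
    exact IH _ (hN ▸ hlt) V' rfl G' K' hc' hO'
end MainThm

open Classical in
lemma deg_dg_aux {n : ℕ} (G H : SimpleGraph (Fin n))
    (hH : ∀ u v, H.Adj u v ↔ u ≠ v ∧ ¬ G.Adj u v) (x : Fin n) :
    deg G x + dg H univ x + 1 = n := by
  have h1 : deg G x = dg G univ x := by
    unfold deg dg
    rw [Nat.card_coe_set_eq, ← Set.ncard_coe_finset]
    congr 1
    ext v
    simp
  have h2 : dg G univ x + dg H univ x = (univ.erase x).card := by
    unfold dg
    rw [← Finset.card_union_of_disjoint]
    · congr 1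
      ext v
      simp only [mem_union, mem_filter, mem_univ, true_and, hH, mem_erase,
        and_true]
      constructor
      · rintro (h | h)
        · exact h.ne'
        · exact fun e => h.1 e.symm
      · intro h
        by_cases hv : G.Adj x v
        · exact Or.inl hv
        · exact Or.inr ⟨fun e => h e.symm, hv⟩
    · rw [Finset.disjoint_filter]
      intro v _ hv hv'
      exact ((hH _ _).1 hv').2 hv
  rw [Finset.card_erase_of_mem (mem_univ x), card_univ, Fintype.card_fin] at h2
  have := x.2
  omega

lemma deg_dg {n : ℕ} (G : SimpleGraph (Fin n)) (x : Fin n) :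
    deg G x + dg Gᶜ univ x + 1 = n :=
  deg_dg_aux G Gᶜ (fun u v => SimpleGraph.compl_adj G u v) x
end Packing

/-- (Kierstead–Kostochka) Let `r ≥ 1` divide `n`. If every pair of distinct non-adjacent
vertices `x, y` of a graph `G` on `n` vertices satisfies
`d(x) + d(y) ≥ 2(1 - 1/r)n - 1 = 2(r-1)(n/r) - 1`, then `G` has a perfect `K_r`-packing. -/
theorem stmt17 (n r : ℕ) (hr : 1 ≤ r) (hdvd : r ∣ n) (G : SimpleGraph (Fin n))
    (hOre : ∀ x y : Fin n, x ≠ y → ¬ G.Adj x y →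
      2 * ((r - 1) * (n / r)) - 1 ≤ deg G x + deg G y) :
    HasPerfectKrPacking G r := by
  classical
  obtain ⟨k, rfl⟩ := hdvd
  have hk : r * k / r = k := Nat.mul_div_cancel_left k hr
  rw [hk] at hOre
  have hO : Ore Gᶜ k := by
    intro x y hxy
    rw [SimpleGraph.compl_adj] at hxy
    have h1 := hOre x y hxy.1 hxy.2
    have h2 := deg_dg G x
    have h3 := deg_dg G y
    have h4 : (r - 1) * k + k = r * k := by
      obtain ⟨m, rfl⟩ : ∃ m, r = m + 1 := ⟨r - 1, by omega⟩
      simp; ring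
    omega
  obtain ⟨f, f1, f2⟩ := EQ_main r _ (Fin (r * k)) rfl Gᶜ k (by simp [mul_comm]) hO
  refine ⟨Finset.univ.image (fun c => Finset.univ.filter (fun v => f v = c)), ?_, ?_, ?_⟩
  · intro p hp
    obtain ⟨c, _, rfl⟩ := Finset.mem_image.1 hp
    refine ⟨?_, ?_⟩
    · refine Eq.trans ?_ (f2 c)
      unfold sz
      congr 1
      ext v; simp
    · intro x hx y hy hxy
      simp only [Finset.coe_filter, Finset.mem_univ, true_and, Set.mem_ofPred_eq] at hx hy
      by_contra hn
      exact f1 x (Finset.mem_univ _) y (Finset.mem_univ _)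
        ((SimpleGraph.compl_adj _ _ _).2 ⟨hxy, hn⟩) (hx.trans hy.symm)
  · intro p hp p' hp' hne
    obtain ⟨c, _, rfl⟩ := Finset.mem_image.1 (Finset.mem_coe.1 hp)
    obtain ⟨d, _, rfl⟩ := Finset.mem_image.1 (Finset.mem_coe.1 hp')
    change Disjoint (Finset.univ.filter (fun v => f v = c)) (Finset.univ.filter (fun v => f v = d))
    rw [Finset.disjoint_filter]
    intro v _ hc hd
    apply hne
    rw [← hc, ← hd]
  · ext v
    simp
end

section
/- Suppose G is a graph on n ≥ 2 vertices with degree sequence d_1 ≤ ⋯ ≤ d_n. If for every i with 1 ≤ i ≤ n/2 we have d_i ≥ i or d_{n−i+1} ≥ n − i, then G contains a Hamilton path. -/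
open Classical in
theorem countLemma {V : Type*} (P Q : V → Prop) : ∀ (l : List V) (hne : l ≠ []),
    (∀ s a b t, l = s ++ a :: b :: t → ¬ (P a ∧ Q b)) →
    ¬ P (l.getLast hne) →
    l.countP (fun x => decide (P x)) + l.tail.countP (fun x => decide (Q x)) + 1 ≤ l.length := by
  intro l
  induction l with
  | nil => intro h; exact absurd rfl h
  | cons x l ih =>
    intro _ h1 h2
    cases l with
    | nil =>
      have h2' : ¬ P x := h2
      simp [h2']
    | cons y l =>
      have ih' := ih (by simp) (fun s a b t h => h1 (x :: s) a b t (by rw [h]; rfl))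
        (by simpa using h2)
      have h3 := h1 [] x y l rfl
      simp only [List.tail_cons, List.countP_cons, List.length_cons, decide_eq_true_eq] at ih' ⊢
      by_cases hp : P x
      · have hq : ¬ Q y := fun hq => h3 ⟨hp, hq⟩
        simp only [hp, hq, if_true, if_false]
        omega
      · simp only [hp, if_false]
        split_ifs at * <;> omega

open Classical in
theorem countLemma2 {V : Type*} (P Q : V → Prop) (l : List V) (hne : l ≠ [])
    (h : ∀ s a b t, l = s ++ a :: b :: t → ¬ (P a ∧ Q b))
    (h1 : ¬ P (l.getLast hne)) (h2 : ¬ Q (l.head hne)) :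
    l.countP (fun x => decide (P x)) + l.countP (fun x => decide (Q x)) + 1 ≤ l.length := by
  have := countLemma P Q l hne h h1
  cases l with
  | nil => exact absurd rfl hne
  | cons x l =>
    have h2' : ¬ Q x := h2
    simpa [List.countP_cons, h2'] using this

def HamL {V : Type*} (G : SimpleGraph V) (l : List V) : Prop :=
  l.Nodup ∧ (∀ v, v ∈ l) ∧ l.IsChain G.Adj

theorem chainRev {V : Type*} {G : SimpleGraph V} {l : List V} (h : l.IsChain G.Adj) :
    l.reverse.IsChain G.Adj := by
  rw [List.isChain_reverse]
  exact h.imp (fun a b h => h.symm)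

theorem HamL.rev {V : Type*} {G : SimpleGraph V} {l : List V} (h : HamL G l) :
    HamL G l.reverse :=
  ⟨List.nodup_reverse.2 h.1, fun v => List.mem_reverse.2 (h.2.1 v), chainRev h.2.2⟩

open Classical in
theorem deg_count {V : Type*} [Fintype V] (G : SimpleGraph V) (u : V) (l : List V)
    (hn : l.Nodup) (hm : ∀ v, v ∈ l) :
    G.degree u = l.countP (fun x => decide (G.Adj u x)) := by
  rw [List.countP_eq_length_filter, ← List.toFinset_card_of_nodup (hn.filter _),
    ← SimpleGraph.card_neighborFinset_eq_degree]
  congr 1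
  ext v
  simp [hm]

open Classical in
theorem coreLemma {V : Type*} [Fintype V] (G : SimpleGraph V) (hno : ∀ l, ¬ HamL G l)
    (s t : List V) (u v : V) (hn : ((s ++ [u]) ++ (v :: t)).Nodup)
    (hm : ∀ x, x ∈ (s ++ [u]) ++ (v :: t))
    (hA : (s ++ [u]).IsChain G.Adj) (hB : (v :: t).IsChain G.Adj) :
    G.degree u + G.degree v + 2 ≤ Fintype.card V := by
  have key : ∀ l : List V, l.Perm ((s ++ [u]) ++ (v :: t)) → ¬ l.IsChain G.Adj := fun l hp hc =>
    hno l ⟨hp.nodup_iff.2 hn, fun x => hp.mem_iff.2 (hm x), hc⟩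
  have hlen : ((s ++ [u]) ++ (v :: t)).length = Fintype.card V := by
    rw [← List.toFinset_card_of_nodup hn, ← Finset.card_univ]
    congr 1
    ext x
    exact ⟨fun _ => Finset.mem_univ _, fun _ => List.mem_toFinset.2 (hm x)⟩
  rw [deg_count G u _ hn hm, deg_count G v _ hn hm, ← hlen]
  have hAne : s ++ [u] ≠ [] := by simp
  have c1 := countLemma2 (fun x => G.Adj u x) (fun x => G.Adj v x) (s ++ [u]) hAne
    (by
      rintro p a b q h ⟨ha, hb⟩
      have hlast : (b :: q).getLast? = some u := by
        have := congrArg List.getLast? h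
        simpa [List.getLast?_append, List.getLast?_cons_cons] using this.symm
      have hA' := hA
      rw [h, List.isChain_append_cons_cons] at hA'
      refine key ((p ++ [a]) ++ ((b :: q).reverse ++ (v :: t))) ?_ ?_
      · rw [h]
        have e : (p ++ a :: b :: q) ++ v :: t = (p ++ [a]) ++ ((b :: q) ++ v :: t) := by simp
        rw [e]
        exact List.Perm.append_left _ ((List.reverse_perm _).append_right _)
      · refine hA'.1.append ((chainRev hA'.2.2).append hB ?_) ?_
        · intro x hx y hy
          simp at hx hy
          subst hx; subst hy
          exact hb.symm
        · intro x hx y hy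
          rw [List.head?_append, List.head?_reverse, hlast] at hy
          simp at hx hy
          subst hx; subst hy
          exact ha.symm)
    (by simp)
    (by
      intro h
      refine key ((s ++ [u]).reverse ++ (v :: t)) ((List.reverse_perm _).append_right _)
        ((chainRev hA).append hB ?_)
      intro x hx y hy
      rw [List.getLast?_reverse, List.head?_eq_some_head hAne] at hx
      simp only [Option.mem_def, Option.some.injEq, List.head?_cons] at hx hy
      rw [← hx, ← hy]
      exact h.symm)
  have c2 := countLemma2 (fun x => G.Adj u x) (fun x => G.Adj v x) (v :: t) (by simp)
    (by
      rintro p a b q h ⟨ha, hb⟩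
      have hhead : (p ++ [a]).head? = some v := by
        have := congrArg List.head? h
        cases p <;> simp at this ⊢ <;> exact this.symm
      have hB' := hB
      rw [h, List.isChain_append_cons_cons] at hB'
      refine key ((s ++ [u]) ++ ((p ++ [a]).reverse ++ (b :: q))) ?_ ?_
      · rw [h]
        have e : (p ++ a :: b :: q) = (p ++ [a]) ++ (b :: q) := by simp
        rw [e]
        exact List.Perm.append_left _ ((List.reverse_perm _).append_right _)
      · refine hA.append ((chainRev hB'.1).append hB'.2.2 ?_) ?_
        · intro x hx y hy
          rw [List.getLast?_reverse, hhead] at hx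
          simp at hx hy
          subst hx; subst hy
          exact hb
        · intro x hx y hy
          simp at hx hy
          subst hx; subst hy
          exact ha)
    (by
      intro h
      refine key ((s ++ [u]) ++ (v :: t).reverse) (List.Perm.append_left _ (List.reverse_perm _))
        (hA.append (chainRev hB) ?_)
      intro x hx y hy
      rw [List.head?_reverse, List.getLast?_eq_some_getLast (by simp : v :: t ≠ [])] at hy
      simp only [List.getLast?_append, Option.mem_def, Option.some.injEq,
        List.getLast?_singleton, Option.some_or] at hx hy
      rw [← hx, ← hy]
      exact h)
    (by simp)
  rw [List.countP_append (l₁ := s ++ [u]), List.countP_append (l₁ := s ++ [u]) (l₂ := v :: t),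
    List.length_append (as := s ++ [u])]
  omega

open Classical in
theorem oreLemma {V : Type*} [Fintype V] (G : SimpleGraph V) (hno : ∀ l, ¬ HamL G l)
    (u v : V) (l : List V) (hl : HamL (G ⊔ SimpleGraph.edge u v) l) :
    G.degree u + G.degree v + 2 ≤ Fintype.card V := by
  obtain ⟨hn, hm, hc⟩ := hl
  have hnc : ¬ l.IsChain G.Adj := fun h => hno l ⟨hn, hm, h⟩
  rw [List.isChain_iff_forall_rel_of_append_cons_cons] at hnc
  push Not at hnc
  obtain ⟨a, b, s, t, h, hab⟩ := hnc
  have e : s ++ a :: b :: t = (s ++ [a]) ++ (b :: t) := by simp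
  have hc' := hc
  rw [h, List.isChain_append_cons_cons] at hc'
  rw [h, e] at hn hm
  have hdisj := List.nodup_append.1 hn
  have hu : (a = u ∧ b = v) ∨ (a = v ∧ b = u) := by
    have := hc'.2.1
    rw [SimpleGraph.sup_adj, SimpleGraph.edge_adj] at this
    tauto
  have hA : (s ++ [a]).IsChain G.Adj := by
    refine hc'.1.imp_of_mem_imp ?_
    intro x y hx hy hxy
    rw [SimpleGraph.sup_adj, SimpleGraph.edge_adj] at hxy
    rcases hxy with h | h
    · exact h
    · exfalso
      have h1 := hdisj.2.2 x hx b (by simp)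
      have h2 := hdisj.2.2 y hy b (by simp)
      rcases hu with ⟨rfl, rfl⟩ | ⟨rfl, rfl⟩ <;> tauto
  have hB : (b :: t).IsChain G.Adj := by
    refine hc'.2.2.imp_of_mem_imp ?_
    intro x y hx hy hxy
    rw [SimpleGraph.sup_adj, SimpleGraph.edge_adj] at hxy
    rcases hxy with h | h
    · exact h
    · exfalso
      have h1 := hdisj.2.2 a (by simp) x hx
      have h2 := hdisj.2.2 a (by simp) y hy
      rcases hu with ⟨rfl, rfl⟩ | ⟨rfl, rfl⟩ <;> (have := h1.symm; have := h2.symm; tauto)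
  have := coreLemma G hno s t a b hn hm hA hB
  rcases hu with ⟨rfl, rfl⟩ | ⟨rfl, rfl⟩ <;> omega

open Classical in
def ChvCond {V : Type*} [Fintype V] (G : SimpleGraph V) : Prop :=
  ∀ i : ℕ, 1 ≤ i → 2 * i ≤ Fintype.card V →
    (Finset.univ.filter (fun v => G.degree v < i)).card < i ∨
    i ≤ (Finset.univ.filter (fun v => Fintype.card V - i ≤ G.degree v)).card

theorem ChvCond.mono {V : Type*} [Fintype V] {G H : SimpleGraph V} (hGH : G ≤ H)
    (h : ChvCond G) : ChvCond H := by
  classical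
  intro i h1 h2
  have hd : ∀ v, G.degree v ≤ H.degree v := fun v => SimpleGraph.degree_le_of_le hGH
  rcases h i h1 h2 with h | h
  · left
    refine lt_of_le_of_lt (Finset.card_le_card ?_) h
    intro v hv
    simp only [Finset.mem_filter, Finset.mem_univ, true_and] at hv ⊢
    exact lt_of_le_of_lt (by convert hd v) hv
  · right
    refine h.trans (Finset.card_le_card ?_)
    intro v hv
    simp only [Finset.mem_filter, Finset.mem_univ, true_and] at hv ⊢
    exact hv.trans (by convert hd v)

theorem chvatalMain {V : Type*} [Fintype V] (G₀ : SimpleGraph V) (h₀ : ChvCond G₀) :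
    ∃ l, HamL G₀ l := by
  classical
  by_contra hcon
  push Not at hcon
  obtain ⟨G, hG₀, hmax⟩ := Finite.exists_le_maximal
    (p := fun G : SimpleGraph V => ChvCond G ∧ ∀ l, ¬ HamL G l) ⟨h₀, hcon⟩
  obtain ⟨hG, hno⟩ := hmax.prop
  have hore : ∀ u v, u ≠ v → ¬ G.Adj u v → G.degree u + G.degree v + 2 ≤ Fintype.card V := by
    intro u v huv hadj
    have hlt := SimpleGraph.lt_sup_edge G u v huv hadj
    have hH := hG.mono hlt.le
    by_cases hex : ∃ l, HamL (G ⊔ SimpleGraph.edge u v) l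
    · obtain ⟨l, hl⟩ := hex
      convert oreLemma G hno u v l hl
    · push Not at hex
      exact absurd (hmax.le_of_ge ⟨hH, hex⟩ hlt.le) (not_le_of_gt hlt)
  -- a nonadjacent pair of maximal degree sum
  let S : Finset (V × V) := Finset.univ.filter (fun p => p.1 ≠ p.2 ∧ ¬ G.Adj p.1 p.2)
  have hS : S.Nonempty := by
    by_contra hS
    rw [Finset.not_nonempty_iff_eq_empty] at hS
    apply hno (Finset.univ : Finset V).toList
    refine ⟨Finset.nodup_toList _, by simp, ?_⟩
    refine List.Pairwise.isChain ((Finset.nodup_toList (Finset.univ : Finset V)).imp ?_)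
    intro a b hab
    by_contra hadj
    have : (a, b) ∈ S := by simp only [S, Finset.mem_filter]; exact ⟨Finset.mem_univ _, hab, hadj⟩
    rw [hS] at this
    simp at this
  obtain ⟨⟨u, v⟩, hp, hpm⟩ := S.exists_max_image (fun p => G.degree p.1 + G.degree p.2) hS
  have hfin : ∀ u v, u ≠ v → ¬ G.Adj u v → G.degree u ≤ G.degree v →
      (∀ a b, a ≠ b → ¬ G.Adj a b → G.degree a + G.degree b ≤ G.degree u + G.degree v) →
      False := by
    intro u v huv hadj hle hm
    have h1 := hore u v huv hadj
    rcases hG (G.degree u + 1) (by omega) (by omega) with h | h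
    · have hsub : Finset.univ \ (insert v (G.neighborFinset v)) ⊆
          Finset.univ.filter (fun w => G.degree w < G.degree u + 1) := by
        intro w hw
        simp only [Finset.mem_sdiff, Finset.mem_univ, true_and, Finset.mem_insert,
          SimpleGraph.mem_neighborFinset, not_or, Finset.mem_filter] at hw ⊢
        have := hm w v hw.1 (fun h => hw.2 h.symm)
        omega
      have hc := Finset.card_le_card hsub
      rw [Finset.card_sdiff_of_subset (Finset.subset_univ _), Finset.card_insert_of_notMem (by simp),
        SimpleGraph.card_neighborFinset_eq_degree, Finset.card_univ] at hc
      have h' : (Finset.univ.filter (fun w => G.degree w < G.degree u + 1)).card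
        < G.degree u + 1 := by convert h
      omega
    · have hsub : Finset.univ.filter (fun w => Fintype.card V - (G.degree u + 1) ≤ G.degree w) ⊆
          G.neighborFinset u := by
        intro w hw
        simp only [Finset.mem_univ, true_and,
          SimpleGraph.mem_neighborFinset, Finset.mem_filter] at hw ⊢
        by_contra hna
        by_cases hwu : w = u
        · subst hwu; omega
        · have := hm u w (fun h => hwu h.symm) hna
          omega
      have hc := Finset.card_le_card hsub
      rw [SimpleGraph.card_neighborFinset_eq_degree] at hc
      have h' : G.degree u + 1 ≤ (Finset.univ.filter
        (fun w => Fintype.card V - (G.degree u + 1) ≤ G.degree w)).card := by convert h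
      omega
  simp only [S, Finset.mem_filter, Finset.mem_univ, true_and] at hp hpm
  have hpm' : ∀ a b, a ≠ b → ¬ G.Adj a b →
      G.degree a + G.degree b ≤ G.degree u + G.degree v := fun a b h1 h2 => hpm (a, b) ⟨h1, h2⟩
  rcases le_total (G.degree u) (G.degree v) with hle | hle
  · exact hfin u v hp.1 hp.2 hle hpm'
  · refine hfin v u hp.1.symm (fun h => hp.2 h.symm) hle (fun a b h1 h2 => ?_)
    have := hpm' a b h1 h2
    omega

/-- (Chvátal) Let `G` be a graph on `n ≥ 2` vertices with nondecreasing degree sequence `d`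
(realised via a permutation `σ` of the vertices, 1-based: `d_i = d ⟨i-1⟩`). If for every
`1 ≤ i ≤ n/2` we have `d_i ≥ i` or `d_{n-i+1} ≥ n - i`, then `G` has a Hamilton path. -/
theorem stmt19 (n : ℕ) (hn : 2 ≤ n) (G : SimpleGraph (Fin n))
    (d : Fin n → ℕ) (σ : Equiv.Perm (Fin n))
    (hmono : Monotone d) (hdeg : ∀ i, d i = deg G (σ i))
    (hcond : ∀ i : ℕ, ∀ h1 : 1 ≤ i, ∀ h2 : 2 * i ≤ n,
      i ≤ d ⟨i - 1, by omega⟩ ∨ n - i ≤ d ⟨n - i, by omega⟩) :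
    ∃ (a b : Fin n) (p : G.Walk a b), p.IsHamiltonian := by
  classical
  have hd : ∀ i, d i = G.degree (σ i) := by
    intro i
    rw [hdeg, deg, Nat.card_eq_fintype_card, SimpleGraph.card_neighborSet_eq_degree]
  have hC : ChvCond G := by
    intro i h1 h2
    rw [Fintype.card_fin] at h2 ⊢
    rcases hcond i h1 h2 with h | h
    · left
      have hsub : (Finset.univ.filter (fun v => G.degree v < i)) ⊆
          (Finset.univ.filter (fun j : Fin n => (j : ℕ) < i - 1)).map σ.toEmbedding := by
        intro v hv
        simp only [Finset.mem_filter, Finset.mem_univ, true_and] at hv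
        simp only [Finset.mem_map_equiv, Finset.mem_filter, Finset.mem_univ, true_and]
        by_contra hlt
        have h3 : (⟨i - 1, by omega⟩ : Fin n) ≤ σ.symm v := by
          rw [Fin.le_def]; simp only; omega
        have h4 := hmono h3
        rw [hd (σ.symm v), Equiv.apply_symm_apply] at h4
        omega
      have hc := Finset.card_le_card hsub
      rw [Finset.card_map, Fin.card_filter_val_lt] at hc
      refine lt_of_le_of_lt (b := min n (i - 1)) ?_ (by omega)
      convert hc
    · right
      have hsub : (Finset.univ.filter (fun j : Fin n => (n - i) ≤ (j : ℕ))).map σ.toEmbedding ⊆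
          (Finset.univ.filter (fun v => n - i ≤ G.degree v)) := by
        intro v hv
        simp only [Finset.mem_map_equiv, Finset.mem_filter, Finset.mem_univ, true_and] at hv ⊢
        have h3 : (⟨n - i, by omega⟩ : Fin n) ≤ σ.symm v := by
          rw [Fin.le_def]; exact hv
        have h4 := hmono h3
        rw [hd (σ.symm v), Equiv.apply_symm_apply] at h4
        omega
      have hc := Finset.card_le_card hsub
      have e : (Finset.univ.filter (fun j : Fin n => (n - i) ≤ (j : ℕ))) =
          Finset.Ici (⟨n - i, by omega⟩ : Fin n) := by
        ext j; simp [Fin.le_def]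
      rw [Finset.card_map, e, Fin.card_Ici] at hc
      simp only at hc
      refine le_trans (b := n - (n - i)) (by omega) ?_
      convert hc
  obtain ⟨l, hnd, hm, hc⟩ := chvatalMain G hC
  have hne : l ≠ [] := List.ne_nil_of_mem (hm ⟨0, by omega⟩)
  refine ⟨_, _, SimpleGraph.Walk.ofSupport l hne hc, ?_⟩
  intro a
  rw [SimpleGraph.Walk.support_ofSupport]
  have := List.count_eq_one_of_mem hnd (hm a)
  convert this
end
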